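/- arXiv:2105.01751 — 10 statements merged into one kernel-verified Lean document; each statement's English description precedes it below -/
import Mathlib

section
/- Let F be a field and k ≥ 2. Let C = T_1 + ⋯ + T_k be a set-multilinear ΣΠΣ(k) circuit with respect to a partition X = X_1 ⊔ ⋯ ⊔ X_d. Suppose C is simple (gcd(T_1,…,T_k) = 1), minimal (for every nonempty proper subset U ⊊ {1,…,k}, Σ_{i∈U} T_i ≠ 0), and computes the zero polynomial (T_1 + ⋯ + T_k = 0). Then deg(T_i) ≤ k − 2 for every i ∈ {1,…,k}; equivalently, d ≤ k − 2. -/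
open MvPolynomial

/-!
Call a family of vectors unsplit if no partition of its index set makes the spans of the two parts
independent. The gates of a minimal circuit computing zero are unsplit.

The heart of the matter is that an unsplit family of nonzero pure tensors `u i ⊗ v i` satisfies
`rk u + rk v ≤ rk (u ⊗ v) + 1`. Grow a set `s` of indices from a singleton, at each step adding an
ear: a minimal `c` disjoint from `s` for which the spans of the tensors over `s` and over `c` meet.
By minimality the ear raises `rk (u ⊗ v)` by at least `|c| - 1`. On the other hand some combination
of the tensors over `c` lies in the span of those over `s`. Modulo `span (u i : i ∈ s)` it becomes a
relation `∑ a i • u i ⊗ v i = 0` with no zero coefficients, which forces the ranks of `u` (modulo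
that span) and of `v` over `c` to add up to at most `|c|`; hence the ear raises `rk u + rk v` by at
most `|c| - 1`.

Polynomials in disjoint sets of variables multiply like tensors, so peeling off one block at a time
gives `∑ j, rk (column j) + 1 ≤ rk (gates) + d`. The gates add up to zero, so their rank is at most
`k - 1`, and simplicity makes every column have rank at least `2`. Thus `2 d + 1 ≤ (k - 1) + d`.
-/

open Module Submodule
open scoped Function TensorProduct

section Rank

variable {F ι V : Type*} [DivisionRing F] [AddCommGroup V] [Module F V]

theorem finrank_sup_le_finrank_add_finrank_map_mkQ (W Z : Submodule F V)
    [FiniteDimensional F W] [FiniteDimensional F Z] :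
    finrank F ↥(W ⊔ Z) ≤ finrank F W + finrank F (Z.map W.mkQ) := by
  have hrange : LinearMap.range (W.mkQ.domRestrict (W ⊔ Z)) = Z.map W.mkQ := by
    simp [LinearMap.range_domRestrict, Submodule.map_sup]
  have hker : finrank F (LinearMap.ker (W.mkQ.domRestrict (W ⊔ Z))) ≤ finrank F W := by
    rw [LinearMap.ker_domRestrict, Submodule.ker_mkQ, ← Submodule.finrank_map_subtype_eq]
    exact Submodule.finrank_mono (Submodule.map_comap_le _ _)
  have h := LinearMap.finrank_range_add_finrank_ker (W.mkQ.domRestrict (W ⊔ Z))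
  rw [hrange] at h
  lia

instance finiteDimensional_span_image (v : ι → V) (s : Set ι) [Finite s] :
    FiniteDimensional F (span F (v '' s)) :=
  FiniteDimensional.span_of_finite F (s.toFinite.image v)

theorem finrank_image_union_le (v : ι → V) (s t : Set ι) [Finite s] [Finite t] :
    (v '' (s ∪ t)).finrank F ≤
      (v '' s).finrank F + ((fun i => (span F (v '' s)).mkQ (v i)) '' t).finrank F := by
  have h := finrank_sup_le_finrank_add_finrank_map_mkQ (span F (v '' s)) (span F (v '' t))
  rwa [← span_union, ← Set.image_union, map_span, Set.image_image] at h

theorem finrank_image_union_of_disjoint {v : ι → V} {s t : Set ι} [Finite s] [Finite t]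
    (h : Disjoint (span F (v '' s)) (span F (v '' t))) :
    (v '' (s ∪ t)).finrank F = (v '' s).finrank F + (v '' t).finrank F := by
  have hsum := finrank_sup_add_finrank_inf_eq (span F (v '' s)) (span F (v '' t))
  rwa [h.eq_bot, finrank_bot, ← span_union, ← Set.image_union] at hsum

theorem finrank_image_union_lt_of_not_disjoint {v : ι → V} {s t : Set ι} [Finite s] [Finite t]
    (h : ¬Disjoint (span F (v '' s)) (span F (v '' t))) :
    (v '' (s ∪ t)).finrank F < (v '' s).finrank F + (v '' t).finrank F := by
  have hsum := finrank_sup_add_finrank_inf_eq (span F (v '' s)) (span F (v '' t))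
  rw [← span_union, ← Set.image_union] at hsum
  have hinf := one_le_finrank_iff.2 (mt disjoint_iff.2 h)
  exact (Nat.lt_add_of_pos_right hinf).trans_eq hsum

theorem finrank_image_eq_card_of_linearIndepOn {v : ι → V} {s : Finset ι}
    (h : LinearIndepOn F v (s : Set ι)) :
    (v '' s).finrank F = s.card := by
  rw [Set.finrank, Set.image_eq_range]
  exact (finrank_span_eq_card (ι := s) h).trans (Fintype.card_coe s)

theorem finrank_image_le_card (v : ι → V) (s : Finset ι) : (v '' s).finrank F ≤ s.card := by
  classical
  rw [← Finset.coe_image]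
  exact (finrank_span_finset_le_card _).trans Finset.card_image_le

theorem finrank_range_lt_card_of_sum_eq_zero [Fintype ι] [Nonempty ι] {v : ι → V}
    (hzero : ∑ i, v i = 0) : (Set.range v).finrank F < Fintype.card ι := by
  refine (finrank_range_le_card v).lt_of_ne fun h => ?_
  have hv : LinearIndependent F v := linearIndependent_iff_card_eq_finrank_span.2 h.symm
  exact one_ne_zero <| Fintype.linearIndependent_iff.1 hv 1 (by simpa using hzero)
    (Classical.arbitrary ι)

theorem finrank_range_map {U : Type*} [AddCommGroup U] [Module F U] {f : U →ₗ[F] V}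
    (hf : Function.Injective f) (u : ι → U) :
    (Set.range fun i => f (u i)).finrank F = (Set.range u).finrank F := by
  rw [Set.finrank, Set.range_comp' f u, ← map_span]
  exact (equivMapOfInjective f hf _).finrank_eq.symm

end Rank

section Unsplit

variable {F ι V : Type*} [DivisionRing F] [AddCommGroup V] [Module F V]

variable (F) in
/-- A family `v` is unsplit if its index set has no partition into two nonempty parts over which
the spans of `v` are independent. For at least two indices this says that the linear matroid of `v`
is connected. -/
def IsUnsplit (v : ι → V) : Prop :=
  ∀ s : Set ι, s.Nonempty → sᶜ.Nonempty → ¬Disjoint (span F (v '' s)) (span F (v '' sᶜ))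

variable (F) in
/-- An ear of the family `v` on `s`, as in ear decompositions of connected matroids: a minimal
finite set `c` of indices outside `s` such that the spans of `v` over `s` and over `c` are not
independent. -/
def IsEar (v : ι → V) (s : Set ι) (c : Finset ι) : Prop :=
  Minimal (fun c : Finset ι => Disjoint s ↑c ∧ ¬Disjoint (span F (v '' s)) (span F (v '' c))) c

namespace IsEar

variable {v : ι → V} {s : Set ι} {c : Finset ι}

theorem disjoint_span_sdiff (h : IsEar F v s c) {e : ι} (he : e ∈ c) :
    Disjoint (span F (v '' s)) (span F (v '' (↑c \ {e}))) := by
  classical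
  rw [← Finset.coe_erase]
  by_contra hne
  have := h.not_prop_of_lt (Finset.erase_ssubset he)
  exact this ⟨h.prop.1.mono_right (by simp), hne⟩

theorem linearIndepOn (h : IsEar F v s c) : LinearIndepOn F v (c : Set ι) := by
  refine linearIndepOn_iff_notMem_span.2 fun e he hmem => h.prop.2 ?_
  refine (h.disjoint_span_sdiff he).mono_right (span_le.2 ?_)
  rintro _ ⟨i, hi, rfl⟩
  obtain rfl | hie := eq_or_ne i e
  · exact hmem
  · exact subset_span ⟨i, ⟨hi, hie⟩, rfl⟩

theorem nonempty (h : IsEar F v s c) : c.Nonempty := by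
  by_contra! hc
  exact h.prop.2 (by simp [hc])

theorem finrank_add_card_le [Finite s] (h : IsEar F v s c) :
    (v '' s).finrank F + c.card ≤ (v '' (s ∪ c)).finrank F + 1 := by
  classical
  obtain ⟨e, he⟩ := h.nonempty
  have hindep : (v '' ↑(c.erase e)).finrank F = (c.erase e).card :=
    finrank_image_eq_card_of_linearIndepOn (h.linearIndepOn.mono (by simp))
  have hsum := finrank_image_union_of_disjoint (F := F) (v := v) (s := s) (t := ↑(c.erase e))
    (by simpa using h.disjoint_span_sdiff he)
  have hmono : (v '' (s ∪ ↑(c.erase e))).finrank F ≤ (v '' (s ∪ c)).finrank F :=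
    finrank_mono <| span_mono <| Set.image_mono <|
      Set.union_subset_union_right _ <| Finset.coe_subset.2 <| c.erase_subset e
  have := Finset.card_erase_add_one he
  lia

theorem exists_sum_smul_mem_span (h : IsEar F v s c) :
    ∃ a : ι → F, (∀ i ∈ c, a i ≠ 0) ∧ ∑ i ∈ c, a i • v i ∈ span F (v '' s) := by
  classical
  obtain ⟨w, hws, hwc, hw⟩ : ∃ w ∈ span F (v '' s), w ∈ span F (v '' c) ∧ w ≠ 0 := by
    simpa [disjoint_def] using h.prop.2
  obtain ⟨a, rfl⟩ := (mem_span_image_finset_iff_exists_fun' F).1 hwc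
  refine ⟨a, fun i hi hai => hw ?_, hws⟩
  refine disjoint_def.1 (h.disjoint_span_sdiff hi) _ hws ?_
  rw [← Finset.sum_erase c (a := i) (by rw [hai, zero_smul]), ← Finset.coe_erase]
  exact sum_mem fun j hj => smul_mem _ _ <| subset_span ⟨j, hj, rfl⟩

end IsEar

theorem IsUnsplit.exists_isEar [Finite ι] {v : ι → V} (h : IsUnsplit F v) {s : Set ι}
    (hs : s.Nonempty) (hs' : sᶜ.Nonempty) : ∃ c, IsEar F v s c := by
  refine exists_minimal_of_wellFoundedLT _ ⟨sᶜ.toFinite.toFinset, ?_⟩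
  simpa using ⟨disjoint_compl_right, h s hs hs'⟩

theorem IsUnsplit.ear_induction [Finite ι] [Nonempty ι] {v : ι → V} (h : IsUnsplit F v)
    {P : Set ι → Prop} (singleton : ∀ i, P {i})
    (union_ear : ∀ s c, IsEar F v s c → P s → P (s ∪ ↑c)) : P Set.univ := by
  obtain ⟨s, -, hs⟩ := Finite.exists_le_maximal (p := fun s : Set ι => s.Nonempty ∧ P s)
    ⟨Set.singleton_nonempty _, singleton (Classical.arbitrary ι)⟩
  obtain hcompl | hcompl := sᶜ.eq_empty_or_nonempty
  · rw [← Set.compl_empty_iff.1 hcompl]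
    exact hs.prop.2
  obtain ⟨c, hc⟩ := h.exists_isEar hs.prop.1 hcompl
  obtain ⟨e, he⟩ := hc.nonempty
  have hcs : s ∪ ↑c ⊆ s :=
    hs.le_of_ge ⟨hs.prop.1.inl, union_ear s c hc hs.prop.2⟩ Set.subset_union_left
  exact absurd he (Set.disjoint_left.1 hc.prop.1 (hcs (Or.inr he)))

theorem isUnsplit_of_sum_eq_zero [Fintype ι] {v : ι → V}
    (hmin : ∀ s : Finset ι, s.Nonempty → s ≠ Finset.univ → ∑ i ∈ s, v i ≠ 0)
    (hzero : ∑ i, v i = 0) : IsUnsplit F v := by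
  classical
  intro s hs hs' hdisj
  lift s to Finset ι using s.toFinite
  have hcompl : ∑ i ∈ s, v i = -∑ i ∈ sᶜ, v i :=
    eq_neg_of_add_eq_zero_left ((Finset.sum_add_sum_compl s v).trans hzero)
  have hmem (t : Finset ι) : ∑ i ∈ t, v i ∈ span F (v '' t) :=
    sum_mem fun i hi => subset_span (Set.mem_image_of_mem v hi)
  have hne : s ≠ Finset.univ := by
    rintro rfl
    simp at hs'
  refine hmin s hs hne (disjoint_def.1 hdisj _ (hmem s) ?_)
  rw [hcompl, ← Finset.coe_compl]
  exact neg_mem (hmem sᶜ)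

theorem isUnsplit_map_iff {U : Type*} [AddCommGroup U] [Module F U] {f : U →ₗ[F] V}
    (hf : Function.Injective f) {u : ι → U} :
    IsUnsplit F (fun i => f (u i)) ↔ IsUnsplit F u := by
  refine forall₃_congr fun s _ _ => ?_
  rw [← Set.image_image f u s, ← Set.image_image f u sᶜ, ← map_span, ← map_span,
    disjoint_iff, disjoint_iff, ← map_inf f hf,
    (map_injective_of_injective hf).eq_iff' (Submodule.map_bot f)]

end Unsplit

section Tensor

variable {F ι U V : Type*} [Field F] [AddCommGroup U] [Module F U] [AddCommGroup V] [Module F V]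

theorem tmul_ne_zero {x : U} {y : V} (hx : x ≠ 0) (hy : y ≠ 0) : x ⊗ₜ[F] y ≠ 0 := by
  obtain ⟨φ, hφ⟩ := Projective.exists_dual_ne_zero F hx
  intro h
  have hxy : φ x • y = 0 := by simpa using congr(TensorProduct.lid F V (φ.rTensor V $h))
  exact smul_ne_zero hφ hy hxy

theorem mem_span_image_sdiff_of_sum_tmul_eq_zero [DecidableEq ι] {u : ι → U} {v : ι → V}
    {s b : Finset ι} {a : ι → F} (ha : ∀ i ∈ b, a i ≠ 0) (h : ∑ i ∈ s, a i • u i ⊗ₜ[F] v i = 0)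
    (hbs : b ⊆ s) (hb : LinearIndepOn F u (b : Set ι)) {i : ι} (hi : i ∈ b) :
    v i ∈ span F (v '' ↑(s \ b)) := by
  obtain ⟨φ, hφi, hφ⟩ :=
    exists_dual_map_eq_bot_of_notMem (hb.notMem_span (Finset.mem_coe.2 hi)) inferInstance
  have hφb : ∀ j ∈ b, j ≠ i → φ (u j) = 0 := fun j hj hji =>
    (Submodule.eq_bot_iff _).1 hφ _ (mem_map_of_mem (subset_span ⟨j, ⟨hj, hji⟩, rfl⟩))
  have hrel : ∑ j ∈ s, (a j * φ (u j)) • v j = 0 := by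
    simpa [mul_smul] using congr(TensorProduct.lid F V (φ.rTensor V $h))
  rw [← Finset.sum_sdiff hbs, Finset.sum_eq_single_of_mem i hi
    fun j hj hji => by rw [hφb j hj hji, mul_zero, zero_smul]] at hrel
  rw [← smul_mem_iff _ (mul_ne_zero (ha i hi) hφi), eq_neg_of_add_eq_zero_right hrel]
  exact neg_mem <| sum_mem fun j hj => smul_mem _ _ <| subset_span ⟨j, hj, rfl⟩

theorem finrank_add_finrank_le_card_of_sum_tmul_eq_zero {u : ι → U} {v : ι → V} {s : Finset ι}
    {a : ι → F} (ha : ∀ i ∈ s, a i ≠ 0) (h : ∑ i ∈ s, a i • u i ⊗ₜ[F] v i = 0) :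
    (u '' s).finrank F + (v '' s).finrank F ≤ s.card := by
  classical
  obtain ⟨b, hbs, -, hspan, hb⟩ := exists_linearIndepOn_extension (K := F) (v := u)
    (linearIndepOn_empty F u) (Set.empty_subset (s : Set ι))
  lift b to Finset ι using s.finite_toSet.subset hbs
  have hu : (u '' s).finrank F = b.card := by
    rw [← finrank_image_eq_card_of_linearIndepOn hb, Set.finrank, Set.finrank,
      le_antisymm (span_le.2 hspan) (span_mono (Set.image_mono hbs))]
  have hspan_v : span F (v '' s) ≤ span F (v '' ↑(s \ b)) := by
    refine span_le.2 (Set.image_subset_iff.2 fun i hi => ?_)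
    by_cases hib : i ∈ b
    · exact mem_span_image_sdiff_of_sum_tmul_eq_zero (fun j hj => ha j (hbs hj)) h hbs hb hib
    · exact subset_span ⟨i, Finset.mem_sdiff.2 ⟨hi, hib⟩, rfl⟩
  have hv : (v '' s).finrank F ≤ (s \ b).card :=
    (finrank_mono hspan_v).trans (finrank_image_le_card v (s \ b))
  have := Finset.card_sdiff_add_card_eq_card hbs
  lia

theorem disjoint_span_image_tmul_right {u : ι → U} {v : ι → V} {s t : Set ι}
    (h : Disjoint (span F (v '' s)) (span F (v '' t))) :
    Disjoint (span F ((fun i => u i ⊗ₜ[F] v i) '' s)) (span F ((fun i => u i ⊗ₜ[F] v i) '' t)) := by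
  refine disjoint_def.2 fun w hs ht => ?_
  classical
  let b := Basis.ofVectorSpace F U
  refine (TensorProduct.equivFinsuppOfBasisLeft b).map_eq_zero_iff.1 (Finsupp.ext fun k => ?_)
  let coord : U ⊗[F] V →ₗ[F] V :=
    Finsupp.lapply k ∘ₗ (TensorProduct.equivFinsuppOfBasisLeft b).toLinearMap
  have hcoord (r : Set ι) :
      span F ((fun i => u i ⊗ₜ[F] v i) '' r) ≤ (span F (v '' r)).comap coord := by
    refine span_le.2 ?_
    rintro _ ⟨i, hi, rfl⟩
    simpa [coord] using smul_mem _ (b.repr (u i) k) (subset_span (Set.mem_image_of_mem v hi))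
  exact disjoint_def.1 h _ (hcoord s hs) (hcoord t ht)

theorem IsEar.finrank_add_finrank_lt {u : ι → U} {v : ι → V} {s : Set ι} [Finite s]
    {c : Finset ι} (h : IsEar F (fun i => u i ⊗ₜ[F] v i) s c) :
    (u '' (s ∪ c)).finrank F + (v '' (s ∪ c)).finrank F <
      (u '' s).finrank F + (v '' s).finrank F + c.card := by
  obtain ⟨a, ha, hmem⟩ := h.exists_sum_smul_mem_span
  have hker : span F ((fun i => u i ⊗ₜ[F] v i) '' s) ≤
      LinearMap.ker ((span F (u '' s)).mkQ.rTensor V) := by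
    refine span_le.2 (Set.image_subset_iff.2 fun i hi => ?_)
    have hi0 : (span F (u '' s)).mkQ (u i) = 0 :=
      (Quotient.mk_eq_zero _).2 (subset_span ⟨i, hi, rfl⟩)
    simp only [Set.mem_preimage, SetLike.mem_coe, LinearMap.mem_ker, LinearMap.rTensor_tmul, hi0,
      TensorProduct.zero_tmul]
  have hrel : ∑ i ∈ c, a i • (span F (u '' s)).mkQ (u i) ⊗ₜ[F] v i = 0 := by
    simpa only [map_sum, map_smul, LinearMap.rTensor_tmul] using LinearMap.mem_ker.1 (hker hmem)
  have hquot := finrank_add_finrank_le_card_of_sum_tmul_eq_zero ha hrel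
  have hu := finrank_image_union_le (F := F) u s c
  have hv := finrank_image_union_lt_of_not_disjoint (F := F)
    (mt disjoint_span_image_tmul_right h.prop.2)
  lia

theorem IsUnsplit.finrank_add_finrank_le [Finite ι] [Nonempty ι] {u : ι → U} {v : ι → V}
    (hu : ∀ i, u i ≠ 0) (hv : ∀ i, v i ≠ 0) (h : IsUnsplit F fun i => u i ⊗ₜ[F] v i) :
    (Set.range u).finrank F + (Set.range v).finrank F ≤
      (Set.range fun i => u i ⊗ₜ[F] v i).finrank F + 1 := by
  rw [← Set.image_univ, ← Set.image_univ, ← Set.image_univ]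
  refine h.ear_induction (P := fun s => (u '' s).finrank F + (v '' s).finrank F ≤
    ((fun i => u i ⊗ₜ[F] v i) '' s).finrank F + 1) (fun i => ?_) fun s c hc ih => ?_
  · rw [Set.image_singleton, Set.image_singleton, Set.image_singleton, Set.finrank, Set.finrank,
      Set.finrank, finrank_span_singleton (hu i), finrank_span_singleton (hv i),
      finrank_span_singleton (tmul_ne_zero (hu i) (hv i))]
  · have htensor := hc.finrank_add_card_le
    have hfactors := hc.finrank_add_finrank_lt
    lia

theorem IsUnsplit.of_tmul {u : ι → U} {v : ι → V} (h : IsUnsplit F fun i => u i ⊗ₜ[F] v i) :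
    IsUnsplit F v :=
  fun s hs hs' hdisj => h s hs hs' (disjoint_span_image_tmul_right hdisj)

end Tensor

section Algebra

variable {F ι A : Type*} [Field F] [Ring A] [Algebra F A]

theorem isUnsplit_mul_iff_isUnsplit_tmul {M N : Submodule F A} (hMN : M.LinearDisjoint N)
    {p : ι → M} {q : ι → N} :
    IsUnsplit F (fun i => (p i * q i : A)) ↔ IsUnsplit F fun i => p i ⊗ₜ[F] q i := by
  have h := isUnsplit_map_iff hMN.injective (u := fun i => p i ⊗ₜ[F] q i)
  simpa only [mulMap_tmul] using h

theorem finrank_range_mul_eq_finrank_range_tmul {M N : Submodule F A} (hMN : M.LinearDisjoint N)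
    (p : ι → M) (q : ι → N) :
    (Set.range fun i => (p i * q i : A)).finrank F =
      (Set.range fun i => p i ⊗ₜ[F] q i).finrank F := by
  have h := finrank_range_map hMN.injective fun i => p i ⊗ₜ[F] q i
  simpa only [mulMap_tmul] using h

theorem IsUnsplit.of_mul_of_linearDisjoint {M N : Submodule F A} (hMN : M.LinearDisjoint N)
    {p q : ι → A} (hpM : ∀ i, p i ∈ M) (hqN : ∀ i, q i ∈ N)
    (h : IsUnsplit F fun i => p i * q i) : IsUnsplit F q := by
  lift p to ι → M using hpM
  lift q to ι → N using hqN
  rw [isUnsplit_mul_iff_isUnsplit_tmul hMN] at h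
  exact (isUnsplit_map_iff N.subtype_injective).2 h.of_tmul

theorem IsUnsplit.finrank_add_finrank_le_of_linearDisjoint [Finite ι] [Nonempty ι]
    {M N : Submodule F A} (hMN : M.LinearDisjoint N) {p q : ι → A} (hpM : ∀ i, p i ∈ M)
    (hqN : ∀ i, q i ∈ N) (hp : ∀ i, p i ≠ 0) (hq : ∀ i, q i ≠ 0)
    (h : IsUnsplit F fun i => p i * q i) :
    (Set.range p).finrank F + (Set.range q).finrank F ≤
      (Set.range fun i => p i * q i).finrank F + 1 := by
  lift p to ι → M using hpM
  lift q to ι → N using hqN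
  rw [isUnsplit_mul_iff_isUnsplit_tmul hMN] at h
  have hrank := h.finrank_add_finrank_le (fun i => Subtype.coe_ne_coe.1 (hp i))
    (fun i => Subtype.coe_ne_coe.1 (hq i))
  rwa [← finrank_range_mul_eq_finrank_range_tmul hMN, ← finrank_range_map M.subtype_injective,
    ← finrank_range_map N.subtype_injective] at hrank

theorem two_le_finrank_range_of_forall_dvd_isUnit [Finite ι] {q : ι → A} {i : ι}
    (hi : q i ≠ 0) (hunit : ¬IsUnit (q i)) (h : ∀ x, (∀ j, x ∣ q j) → IsUnit x) :
    2 ≤ (Set.range q).finrank F := by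
  by_contra! hlt
  have : FiniteDimensional F (span F (Set.range q)) :=
    FiniteDimensional.span_of_finite F (Set.finite_range q)
  have hspan : span F {q i} = span F (Set.range q) :=
    eq_of_le_of_finrank_le (span_mono (by simp)) <| by
      rw [finrank_span_singleton hi]
      exact Nat.le_of_lt_succ hlt
  refine hunit (h _ fun j => ?_)
  obtain ⟨a, ha⟩ := mem_span_singleton.1 (hspan.ge (subset_span ⟨j, rfl⟩))
  rw [← ha]
  exact dvd_smul_of_dvd _ dvd_rfl

end Algebra

section Supported

variable {F ι τ : Type*} [Field F]

theorem mapDomain_add_mapDomain_injective {M : Type*} [AddCommMonoid M] {s t : Set τ}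
    (h : Disjoint s t) : Function.Injective fun x : (s →₀ M) × (t →₀ M) =>
      x.1.mapDomain Subtype.val + x.2.mapDomain Subtype.val := by
  rintro ⟨α, β⟩ ⟨α', β'⟩ heq
  ext ⟨i, hi⟩
  · have hit : i ∉ Set.range (Subtype.val : t → τ) := by simpa using h.notMem_of_mem_left hi
    have := DFunLike.congr_fun heq i
    simpa [Finsupp.mapDomain_of_notMem_range _ _ hit,
      Finsupp.mapDomain_apply Subtype.val_injective _ (⟨i, hi⟩ : s)] using this
  · have his : i ∉ Set.range (Subtype.val : s → τ) := by simpa using h.notMem_of_mem_right hi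
    have := DFunLike.congr_fun heq i
    simpa [Finsupp.mapDomain_of_notMem_range _ _ his,
      Finsupp.mapDomain_apply Subtype.val_injective _ (⟨i, hi⟩ : t)] using this

theorem linearDisjoint_supported {R : Type*} [CommRing R] {s t : Set τ} (h : Disjoint s t) :
    (supported R s).LinearDisjoint (supported R t) := by
  let b (r : Set τ) : Basis (r →₀ ℕ) R (supported R r) :=
    (basisMonomials r R).map (supportedEquivMvPolynomial r).symm.toLinearEquiv
  have hb (r : Set τ) (α : r →₀ ℕ) :
      (b r α : MvPolynomial τ R) = monomial (α.mapDomain Subtype.val) 1 := by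
    simp [b, supportedEquivMvPolynomial, rename_monomial]
  refine Subalgebra.LinearDisjoint.of_basis_mul _ _ (b s) (b t) ?_
  simpa only [hb, monomial_mul, mul_one, coe_basisMonomials, Function.comp_def] using
    (basisMonomials τ R).linearIndependent.comp _ (mapDomain_add_mapDomain_injective h)

theorem prod_mem_supported {R : Type*} [CommSemiring R] {κ : Type*} {b : κ → Set τ}
    {p : κ → MvPolynomial τ R} (hp : ∀ j, p j ∈ supported R (b j)) (s : Finset κ) :
    ∏ j ∈ s, p j ∈ supported R (⋃ j ∈ s, b j) :=
  prod_mem fun j hj => supported_mono (Set.subset_biUnion_of_mem (u := b) hj) (hp j)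

theorem IsUnsplit.sum_finrank_add_one_le_of_supported [Finite ι] [Nonempty ι] {κ : Type*}
    {b : κ → Set τ} (hb : Pairwise (Disjoint on b)) {p : ι → κ → MvPolynomial τ F}
    (hpb : ∀ i j, p i j ∈ supported F (b j)) (hp : ∀ i j, p i j ≠ 0) (s : Finset κ)
    (h : IsUnsplit F fun i => ∏ j ∈ s, p i j) :
    ∑ j ∈ s, (Set.range fun i => p i j).finrank F + 1 ≤
      (Set.range fun i => ∏ j ∈ s, p i j).finrank F + s.card := by
  classical
  induction s using Finset.induction_on with
  | empty =>
    have hone : ({1} : Set (MvPolynomial τ F)).finrank F = 1 := finrank_span_singleton one_ne_zero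
    simp [hone]
  | insert j s hj ih =>
    simp only [Finset.prod_insert hj, Finset.sum_insert hj, Finset.card_insert_of_notMem hj] at h ⊢
    have hdisj : Disjoint (b j) (⋃ l ∈ s, b l) :=
      Set.disjoint_iUnion₂_right.2 fun l hl => hb (ne_of_mem_of_not_mem hl hj).symm
    have hlin := linearDisjoint_supported (R := F) hdisj
    have hmem i := prod_mem_supported (hpb i) s
    have hrest := ih (h.of_mul_of_linearDisjoint hlin (fun i => hpb i j) hmem)
    have hsplit := h.finrank_add_finrank_le_of_linearDisjoint hlin (fun i => hpb i j) hmem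
      (fun i => hp i j) (fun i => Finset.prod_ne_zero_iff.2 fun l _ => hp i l)
    lia

theorem sum_finrank_add_two_le_of_sum_prod_eq_zero [Fintype ι] [Nonempty ι] {κ : Type*} [Fintype κ]
    {b : κ → Set τ} (hb : Pairwise (Disjoint on b)) {p : ι → κ → MvPolynomial τ F}
    (hpb : ∀ i j, p i j ∈ supported F (b j)) (hp : ∀ i j, p i j ≠ 0)
    (hmin : ∀ s : Finset ι, s.Nonempty → s ≠ Finset.univ → ∑ i ∈ s, ∏ j, p i j ≠ 0)
    (hzero : ∑ i, ∏ j, p i j = 0) :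
    ∑ j, (Set.range fun i => p i j).finrank F + 2 ≤ Fintype.card ι + Fintype.card κ := by
  have hrank := (isUnsplit_of_sum_eq_zero hmin hzero).sum_finrank_add_one_le_of_supported hb hpb hp
  have hdep := finrank_range_lt_card_of_sum_eq_zero (F := F) hzero
  rw [Finset.card_univ] at hrank
  lia

end Supported

theorem not_isUnit_of_isHomogeneous {R τ : Type*} [CommSemiring R] [Nontrivial R]
    {p : MvPolynomial τ R} {n : ℕ} (hp : p.IsHomogeneous n) (hn : n ≠ 0) : ¬IsUnit p := by
  intro h
  have h0 : constantCoeff p = 0 := hp.coeff_eq_zero (by simpa using hn.symm)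
  exact not_isUnit_zero (h0 ▸ h.map constantCoeff)

section LinearForm

variable {R : Type*} [CommSemiring R] {κ : Type*} {σ : κ → Type*} [∀ j, Fintype (σ j)]

/-- The linear form with coefficient vector `a` in the variables of block `j`. -/
noncomputable def blockLinearForm (a : ∀ j, σ j → R) (j : κ) : MvPolynomial (Σ j, σ j) R :=
  ∑ t, C (a j t) * X ⟨j, t⟩

theorem blockLinearForm_mem_supported (a : ∀ j, σ j → R) (j : κ) :
    blockLinearForm a j ∈ supported R (Sigma.fst ⁻¹' {j}) :=
  sum_mem fun _ _ =>
    mul_mem (algebraMap_mem _ _) (Algebra.subset_adjoin (Set.mem_image_of_mem X rfl))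

theorem isHomogeneous_blockLinearForm (a : ∀ j, σ j → R) (j : κ) :
    (blockLinearForm a j).IsHomogeneous 1 :=
  IsHomogeneous.sum _ _ _ fun _ _ => isHomogeneous_C_mul_X _ _

theorem coeff_blockLinearForm (a : ∀ j, σ j → R) (j : κ) (t : σ j) :
    coeff (Finsupp.single ⟨j, t⟩ 1) (blockLinearForm a j) = a j t := by
  classical
  simp [blockLinearForm, coeff_sum, coeff_C_mul, coeff_X, Finsupp.single_left_inj]

theorem blockLinearForm_ne_zero {a : ∀ j, σ j → R} {j : κ} (ha : a j ≠ 0) :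
    blockLinearForm a j ≠ 0 := by
  refine fun h => ha (funext fun t => ?_)
  rw [← coeff_blockLinearForm a j t, h, coeff_zero, Pi.zero_apply]

end LinearForm

theorem stmt_0_general {F ι κ τ : Type*} [Field F] [Fintype ι] [Nonempty ι] [Fintype κ]
    {b : κ → Set τ} (hb : Pairwise (Disjoint on b)) {p : ι → κ → MvPolynomial τ F}
    (hpb : ∀ i j, p i j ∈ supported F (b j)) (hp : ∀ i j, p i j ≠ 0)
    (hunit : ∀ j, ∃ i, ¬IsUnit (p i j)) (hsimple : ∀ q, (∀ i, q ∣ ∏ j, p i j) → IsUnit q)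
    (hmin : ∀ s : Finset ι, s.Nonempty → s ≠ Finset.univ → ∑ i ∈ s, ∏ j, p i j ≠ 0)
    (hzero : ∑ i, ∏ j, p i j = 0) :
    Fintype.card κ + 2 ≤ Fintype.card ι := by
  have hcol (j : κ) : 2 ≤ (Set.range fun i => p i j).finrank F := by
    obtain ⟨i, hi⟩ := hunit j
    exact two_le_finrank_range_of_forall_dvd_isUnit (hp i j) hi fun q hq =>
      hsimple q fun i => (hq i).trans (Finset.dvd_prod_of_mem _ (Finset.mem_univ j))
  have hsum := Finset.card_nsmul_le_sum Finset.univ _ 2 fun j _ => hcol j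
  have hrank := sum_finrank_add_two_le_of_sum_prod_eq_zero hb hpb hp hmin hzero
  rw [Finset.card_univ, smul_eq_mul] at hsum
  lia

/-- A simple, minimal set-multilinear ΣΠΣ(k) circuit (k ≥ 2) computing the
zero polynomial has all gate degrees (equivalently, the number of blocks d) at most k − 2.
Gates are given by coefficient vectors `c i j` of the nonzero linear forms `ℓ_{i,j}` in block j;
simplicity `gcd(T_1,…,T_k) = 1` is expressed as: every common divisor of the gates is a unit. -/
theorem stmt_0 {F : Type*} [Field F] {d k : ℕ} (hd : 1 ≤ d) (hk : 2 ≤ k)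
    {n : Fin d → ℕ}
    (c : Fin k → (j : Fin d) → Fin (n j) → F)
    (hc : ∀ i j, c i j ≠ 0)
    (T : Fin k → MvPolynomial ((j : Fin d) × Fin (n j)) F)
    (hT : ∀ i, T i = ∏ j : Fin d, ∑ t : Fin (n j), C (c i j t) * X ⟨j, t⟩)
    (hsimple : ∀ p : MvPolynomial ((j : Fin d) × Fin (n j)) F, (∀ i, p ∣ T i) → IsUnit p)
    (hmin : ∀ U : Finset (Fin k), U.Nonempty → U ≠ Finset.univ → (∑ i ∈ U, T i) ≠ 0)
    (hzero : (∑ i, T i) = 0) :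
    (∀ i, (T i).totalDegree ≤ k - 2) ∧ d ≤ k - 2 := by
  have : NeZero k := ⟨by lia⟩
  obtain rfl : T = fun i => ∏ j, blockLinearForm (c i) j := funext hT
  have hcard := stmt_0_general (p := fun i => blockLinearForm (c i))
    (pairwise_disjoint_fiber Sigma.fst)
    (fun i => blockLinearForm_mem_supported (c i))
    (fun i j => blockLinearForm_ne_zero (hc i j))
    (fun j => ⟨0, not_isUnit_of_isHomogeneous (isHomogeneous_blockLinearForm (c 0) j) one_ne_zero⟩)
    hsimple hmin hzero
  rw [Fintype.card_fin, Fintype.card_fin] at hcard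
  have hdk : d ≤ k - 2 := by lia
  refine ⟨fun i => le_trans ?_ hdk, hdk⟩
  have hhom := IsHomogeneous.prod Finset.univ _ _ fun j _ =>
    isHomogeneous_blockLinearForm (c i) j
  simpa using hhom.totalDegree_le
end

section
/- Let C = T_1 + ⋯ + T_k be a set-multilinear ΣΠΣ(k) circuit with respect to a partition X = X_1 ⊔ ⋯ ⊔ X_d that computes the zero polynomial (T_1 + ⋯ + T_k = 0) and is minimal (for every nonempty proper subset U ⊊ {1,…,k}, Σ_{i∈U} T_i ≠ 0). Then for all i ≠ j in {1,…,k}, the number of linear-form factors of T_i not shared with T_j (counted with multiplicity), namely max(deg T_i, deg T_j) − deg(gcd(T_i, T_j)), is at most k − 2. -/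
open MvPolynomial

/-!
Split the indices of the gates into a nonempty proper set and its complement. The two partial sums
are opposite and, by minimality, nonzero, so the spans of the two groups of gates meet: the linear
matroid of the gates is connected. Stripping the factors of a block from all gates (by taking
derivatives in its variables) preserves connectedness.

Now multiply the blocks back in one at a time, keeping a linearly independent set of partial gates.
It stays independent when block `p` is multiplied in, and if it cannot be enlarged at that moment,
then the span of the new partial gates is the direct sum of the spans of the groups with
proportional factors in block `p`. By connectedness there is only one such group. Hence every block
in which `T_i` and `T_j` have nonproportional factors enlarges the independent set, starting from
one element, and since the gates themselves are dependent there are at most `k - 2` such blocks.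
-/

section ConnectedFamily

open Submodule

variable {F ι τ V M : Type*} [Field F] [AddCommGroup V] [Module F V] [AddCommGroup M] [Module F M]

variable (F) in
/-- A family of vectors is connected if its linear matroid is: no nonempty proper set of indices
spans a subspace independent of the span of the remaining vectors. -/
def IsConnectedFamily (v : ι → M) : Prop :=
  ∀ A : Set ι, A.Nonempty → A ≠ Set.univ → ¬ Disjoint (span F (v '' A)) (span F (v '' Aᶜ))

theorem isConnectedFamily_of_minimal_sum_eq_zero [Fintype ι] {v : ι → M} (hzero : ∑ a, v a = 0)
    (hmin : ∀ U : Finset ι, U.Nonempty → U ≠ Finset.univ → ∑ a ∈ U, v a ≠ 0) :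
    IsConnectedFamily F v := by
  classical
  intro A hA hA' hdisj
  lift A to Finset ι using A.toFinite
  have sum_mem (U : Finset ι) : ∑ a ∈ U, v a ∈ span F (v '' U) :=
    Submodule.sum_mem _ fun a ha => subset_span ⟨a, ha, rfl⟩
  refine hmin A (by simpa using hA) (by simpa using hA') (disjoint_def.1 hdisj _ (sum_mem A) ?_)
  rw [eq_neg_of_add_eq_zero_left ((Finset.sum_add_sum_compl A v).trans hzero), neg_mem_iff,
    ← Finset.coe_compl]
  exact sum_mem Aᶜ

/-! In the following lemmas `v a` plays the role of the tensor `w a ⊗ u a`, and `D t` that of the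
contraction of the first tensor factor with the `t`-th coordinate functional. -/

variable {u : ι → V} {v : ι → M} {w : ι → τ → F} {D : τ → M →ₗ[F] V}

theorem IsConnectedFamily.of_slices (hv : IsConnectedFamily F v)
    (hD : ∀ a t, D t (v a) = w a t • u a)
    (hinj : ∀ x ∈ span F (Set.range v), (∀ t, D t x = 0) → x = 0) : IsConnectedFamily F u := by
  have slice_mem (A : Set ι) (t : τ) : span F (v '' A) ≤ (span F (u '' A)).comap (D t) := by
    rw [span_le]
    rintro _ ⟨a, ha, rfl⟩
    rw [SetLike.mem_coe, mem_comap, hD]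
    exact smul_mem _ _ (subset_span ⟨a, ha, rfl⟩)
  intro A hA hA' hdisj
  refine hv A hA hA' (disjoint_def.2 fun x hx hx' => ?_)
  refine hinj x (span_mono (Set.image_subset_range v A) hx) fun t => ?_
  exact disjoint_def.1 hdisj _ (slice_mem A t hx) (slice_mem Aᶜ t hx')

theorem linearIndepOn_of_slices {B : Finset ι} (hu : LinearIndepOn F u B) (hw : ∀ a, w a ≠ 0)
    (hD : ∀ a t, D t (v a) = w a t • u a) : LinearIndepOn F v B := by
  rw [linearIndepOn_finset_iff] at hu ⊢
  intro g hg b hb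
  obtain ⟨t, ht⟩ := Function.ne_iff.1 (hw b)
  have slice : ∑ a ∈ B, (g a * w a t) • u a = 0 := by
    simpa only [map_sum, map_smul, map_zero, hD, smul_smul] using congrArg (D t) hg
  exact (mul_eq_zero.1 (hu _ slice b hb)).resolve_right ht

/-- Comparing coordinates in the basis `u '' B`, if `u a = ∑ x b • u b` and `v a = ∑ y b • v b`,
then `x b • w a = y b • w b`; so only the `w b` proportional to `w a` occur in the second sum. -/
theorem mem_span_image_proportional {B : Finset ι} (hu : LinearIndepOn F u B) (hw : ∀ a, w a ≠ 0)
    (hD : ∀ a t, D t (v a) = w a t • u a) {a : ι} (hua : u a ∈ span F (u '' B))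
    (hva : v a ∈ span F (v '' B)) : v a ∈ span F (v '' {b ∈ B | F ∙ w b = F ∙ w a}) := by
  obtain ⟨x, hx⟩ := (mem_span_image_finset_iff_exists_fun' F).1 hua
  obtain ⟨y, hy⟩ := (mem_span_image_finset_iff_exists_fun' F).1 hva
  have coord_eq (b) (hb : b ∈ B) : x b • w a = y b • w b := by
    funext t
    refine linearIndepOn_finset_iffₛ.1 hu (fun b => x b * w a t) (fun b => y b * w b t) ?_ b hb
    calc ∑ b ∈ B, (x b * w a t) • u b = w a t • u a := by
          simp only [← hx, Finset.smul_sum, smul_smul, mul_comm]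
      _ = D t (v a) := (hD a t).symm
      _ = ∑ b ∈ B, (y b * w b t) • u b := by
          simp only [← hy, map_sum, map_smul, hD, smul_smul]
  rw [← hy]
  refine Submodule.sum_mem _ fun b hb => ?_
  by_cases hyb : y b = 0
  · simp only [hyb, zero_smul, zero_mem]
  have hxb : x b ≠ 0 := by
    intro hxb
    have hzero := coord_eq b hb
    rw [hxb, zero_smul] at hzero
    exact smul_ne_zero hyb (hw b) hzero.symm
  refine smul_mem _ _ (subset_span ⟨b, ⟨hb, ?_⟩, rfl⟩)
  rw [← span_singleton_smul_eq (isUnit_iff_ne_zero.2 hyb) (w b), ← coord_eq b hb,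
    span_singleton_smul_eq (isUnit_iff_ne_zero.2 hxb)]

theorem disjoint_span_image_proportional {B : Finset ι} (hu : LinearIndepOn F u B)
    (hw : ∀ a, w a ≠ 0) (hD : ∀ a t, D t (v a) = w a t • u a)
    (huB : ∀ a, u a ∈ span F (u '' B)) (hvB : ∀ a, v a ∈ span F (v '' B))
    (L : Submodule F (τ → F)) :
    Disjoint (span F (v '' {a | F ∙ w a = L})) (span F (v '' {a | F ∙ w a = L}ᶜ)) := by
  have span_le_span (P : Submodule F (τ → F) → Prop) :
      span F (v '' {a | P (F ∙ w a)}) ≤ span F (v '' {b ∈ B | P (F ∙ w b)}) := by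
    rw [span_le]
    rintro _ ⟨a, ha, rfl⟩
    refine span_mono (Set.image_mono ?_) (mem_span_image_proportional hu hw hD (huB a) (hvB a))
    rintro b ⟨hb, hba⟩
    exact ⟨hb, hba ▸ ha⟩
  have hv : LinearIndepOn F v
      ({b ∈ (B : Set ι) | F ∙ w b = L} ∪ {b ∈ (B : Set ι) | F ∙ w b ≠ L}) :=
    (linearIndepOn_of_slices hu hw hD).mono
      (Set.union_subset (Set.sep_subset _ _) (Set.sep_subset _ _))
  have hdisj : Disjoint {b ∈ (B : Set ι) | F ∙ w b = L} {b ∈ (B : Set ι) | F ∙ w b ≠ L} :=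
    Set.disjoint_left.2 fun b hb hb' => hb'.2 hb.2
  exact ((linearIndepOn_union_iff hdisj).1 hv).2.2.mono
    (span_le_span (· = L)) (span_le_span (· ≠ L))

theorem IsConnectedFamily.exists_linearIndepOn_card_lt [Finite ι] (hv : IsConnectedFamily F v)
    {B : Finset ι} (hu : LinearIndepOn F u B) (hw : ∀ a, w a ≠ 0)
    (hD : ∀ a t, D t (v a) = w a t • u a) {a a' : ι} (haa' : F ∙ w a ≠ F ∙ w a') :
    ∃ B' : Finset ι, B.card < B'.card ∧ LinearIndepOn F v B' := by
  classical
  obtain ⟨B₁, -, hBB₁, hspan, hu₁⟩ := exists_linearIndepOn_extension hu (Set.subset_univ _)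
  lift B₁ to Finset ι using B₁.toFinite
  obtain ⟨b, hb⟩ : ∃ b, v b ∉ span F (v '' B₁) := by
    by_contra! hvB
    refine hv {b | F ∙ w b = F ∙ w a} ⟨a, rfl⟩ ?_
      (disjoint_span_image_proportional hu₁ hw hD (fun b => hspan ⟨b, trivial, rfl⟩) hvB _)
    exact fun h => haa' (Set.eq_univ_iff_forall.1 h a').symm
  have hbB₁ : b ∉ B₁ := fun h => hb (subset_span ⟨b, h, rfl⟩)
  refine ⟨insert b B₁, ?_, ?_⟩
  · rw [Finset.card_insert_of_notMem hbB₁]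
    exact Nat.lt_succ_of_le (Finset.card_le_card (by exact_mod_cast hBB₁))
  · rw [Finset.coe_insert]
    exact (linearIndepOn_of_slices hu₁ hw hD).insert hb

end ConnectedFamily

section Gates

open Submodule

variable {κ R F ι : Type*} {σ : κ → Type*} [∀ j, Fintype (σ j)] [CommSemiring R] [Field F]

/-- The linear form in the variables of block `j` with a given vector of coefficients. -/
noncomputable def linearForm (j : κ) : (σ j → R) →ₗ[R] MvPolynomial (Σ j, σ j) R :=
  Fintype.linearCombination R fun t => X ⟨j, t⟩

/-- The product of the linear forms with coefficients `c j` over the blocks `j ∈ S`: a partial gate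
of a set-multilinear circuit, and a gate when `S` consists of all blocks. -/
noncomputable def partialGate (c : ∀ j, σ j → R) (S : Finset κ) : MvPolynomial (Σ j, σ j) R :=
  ∏ j ∈ S, linearForm j (c j)

theorem linearForm_eq_sum (j : κ) (w : σ j → R) : linearForm j w = ∑ t, C (w t) * X ⟨j, t⟩ := by
  simp only [linearForm, Fintype.linearCombination_apply, smul_eq_C_mul]

theorem pderiv_linearForm_self (j : κ) (t : σ j) (w : σ j → R) :
    pderiv ⟨j, t⟩ (linearForm j w) = C (w t) := by
  classical
  simp [linearForm_eq_sum, pderiv_X, Pi.single_apply]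

theorem pderiv_linearForm_of_ne {i j : κ} (hij : i ≠ j) (t : σ j) (w : σ i → R) :
    pderiv ⟨j, t⟩ (linearForm i w) = 0 := by
  have hX (s : σ i) : pderiv (⟨j, t⟩ : Σ j, σ j) (X ⟨i, s⟩ : MvPolynomial _ R) = 0 :=
    pderiv_X_of_ne fun h => hij (congrArg Sigma.fst h)
  simp [linearForm_eq_sum, hX]

theorem linearForm_ne_zero {j : κ} {w : σ j → R} (hw : w ≠ 0) : linearForm j w ≠ 0 := by
  obtain ⟨t, ht⟩ := Function.ne_iff.1 hw
  intro h
  have hpderiv := pderiv_linearForm_self j t w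
  rw [h, map_zero] at hpderiv
  exact ht (C_eq_zero.1 hpderiv.symm)

theorem isHomogeneous_linearForm (j : κ) (w : σ j → R) : (linearForm j w).IsHomogeneous 1 := by
  rw [linearForm_eq_sum]
  exact IsHomogeneous.sum _ _ _ fun t _ => isHomogeneous_C_mul_X (w t) _

theorem linearForm_dvd_linearForm {j : κ} {w w' : σ j → F} (h : F ∙ w = F ∙ w') :
    linearForm j w ∣ linearForm j w' := by
  obtain ⟨r, rfl⟩ := span_singleton_eq_span_singleton.1 h
  rw [Units.smul_def, map_smul]
  exact dvd_smul_of_dvd _ dvd_rfl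

theorem partialGate_dvd_partialGate {c c' : ∀ j, σ j → F} {S S' : Finset κ} (hS : S ⊆ S')
    (h : ∀ j ∈ S, F ∙ c j = F ∙ c' j) : partialGate c S ∣ partialGate c' S' :=
  (Finset.prod_dvd_prod_of_dvd _ _ fun j hj => linearForm_dvd_linearForm (h j hj)).trans
    (Finset.prod_dvd_prod_of_subset _ _ _ hS)

theorem totalDegree_partialGate [IsDomain R] {c : ∀ j, σ j → R} (hc : ∀ j, c j ≠ 0)
    (S : Finset κ) : (partialGate c S).totalDegree = S.card := by
  have hhom := IsHomogeneous.prod S _ (fun _ => 1) fun j _ => isHomogeneous_linearForm j (c j)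
  rw [← Finset.card_eq_sum_ones] at hhom
  exact hhom.totalDegree (Finset.prod_ne_zero_iff.2 fun j _ => linearForm_ne_zero (hc j))

theorem pderiv_partialGate_of_notMem (c : ∀ j, σ j → R) {S : Finset κ} {p : κ} (hp : p ∉ S)
    (t : σ p) : pderiv ⟨p, t⟩ (partialGate c S) = 0 := by
  classical
  induction S using Finset.induction_on with
  | empty => exact pderiv_one
  | insert j S hj ih =>
    rw [Finset.mem_insert, not_or] at hp
    rw [partialGate, Finset.prod_insert hj, ← partialGate, pderiv_mul,
      pderiv_linearForm_of_ne (Ne.symm hp.1), ih hp.2, zero_mul, mul_zero, add_zero]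

theorem pderiv_partialGate_insert [DecidableEq κ] (c : ∀ j, σ j → R) {S : Finset κ} {p : κ}
    (hp : p ∉ S) (t : σ p) :
    pderiv ⟨p, t⟩ (partialGate c (insert p S)) = c p t • partialGate c S := by
  rw [partialGate, Finset.prod_insert hp, ← partialGate, pderiv_mul, pderiv_linearForm_self,
    pderiv_partialGate_of_notMem c hp, mul_zero, add_zero, smul_eq_C_mul]

/-- Euler's identity for the variables of block `p`, in which a partial gate has degree one. -/
theorem sum_X_mul_pderiv_partialGate_insert [DecidableEq κ] (c : ∀ j, σ j → R) {S : Finset κ}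
    {p : κ} (hp : p ∉ S) :
    ∑ t, X ⟨p, t⟩ * pderiv ⟨p, t⟩ (partialGate c (insert p S)) = partialGate c (insert p S) := by
  simp_rw [pderiv_partialGate_insert c hp]
  rw [partialGate, partialGate, Finset.prod_insert hp, linearForm_eq_sum, Finset.sum_mul]
  exact Finset.sum_congr rfl fun t _ => by rw [smul_eq_C_mul]; ring

theorem sum_X_mul_pderiv_of_mem_span [DecidableEq κ] (c : ι → ∀ j, σ j → R) {S : Finset κ} {p : κ}
    (hp : p ∉ S) {x : MvPolynomial (Σ j, σ j) R}
    (hx : x ∈ span R (Set.range fun a => partialGate (c a) (insert p S))) :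
    ∑ t, X ⟨p, t⟩ * pderiv ⟨p, t⟩ x = x := by
  induction hx using span_induction with
  | mem _ hx =>
    obtain ⟨a, rfl⟩ := hx
    exact sum_X_mul_pderiv_partialGate_insert (c a) hp
  | zero => simp only [map_zero, mul_zero, Finset.sum_const_zero]
  | add x y _ _ hx hy => simp only [map_add, mul_add, Finset.sum_add_distrib, hx, hy]
  | smul r x _ hx => simp only [Derivation.map_smul, mul_smul_comm, ← Finset.smul_sum, hx]

open scoped Classical in
theorem exists_linearIndepOn_partialGate [Finite ι] {c : ι → ∀ j, σ j → F} (hc : ∀ a j, c a j ≠ 0)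
    (i i' : ι) (S : Finset κ) (hconn : IsConnectedFamily F fun a => partialGate (c a) S) :
    ∃ B : Finset ι, {j ∈ S | F ∙ c i j ≠ F ∙ c i' j}.card < B.card ∧
      LinearIndepOn F (fun a => partialGate (c a) S) B := by
  induction S using Finset.induction_on with
  | empty =>
    refine ⟨{i}, by simp, ?_⟩
    rw [Finset.coe_singleton]
    exact LinearIndepOn.singleton one_ne_zero
  | insert p S hp ih =>
    let D (t : σ p) : MvPolynomial (Σ j, σ j) F →ₗ[F] MvPolynomial (Σ j, σ j) F :=
      (pderiv ⟨p, t⟩).toLinearMap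
    have hD (a : ι) (t : σ p) : D t (partialGate (c a) (insert p S)) =
        c a p t • partialGate (c a) S := pderiv_partialGate_insert (c a) hp t
    have hw (a : ι) : c a p ≠ 0 := hc a p
    have hinj : ∀ x ∈ span F (Set.range fun a => partialGate (c a) (insert p S)),
        (∀ t, D t x = 0) → x = 0 := by
      intro x hx hDx
      rw [← sum_X_mul_pderiv_of_mem_span c hp hx]
      exact Finset.sum_eq_zero fun t _ => mul_eq_zero_of_right _ (hDx t)
    obtain ⟨B, hcard, hB⟩ := ih (hconn.of_slices hD hinj)
    rw [Finset.filter_insert]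
    split_ifs with hne
    · obtain ⟨B', hBB', hB'⟩ := hconn.exists_linearIndepOn_card_lt hB hw hD hne
      exact ⟨B', (Finset.card_insert_le _ _).trans_lt (by omega), hB'⟩
    · exact ⟨B, hcard, linearIndepOn_of_slices hB hw hD⟩

open scoped Classical in
theorem card_nonproportional_add_two_le [Fintype ι] [Fintype κ] {c : ι → ∀ j, σ j → F}
    (hc : ∀ a j, c a j ≠ 0)
    (hmin : ∀ U : Finset ι, U.Nonempty → U ≠ Finset.univ →
      ∑ a ∈ U, partialGate (c a) Finset.univ ≠ 0)
    (hzero : ∑ a, partialGate (c a) Finset.univ = 0) (i i' : ι) :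
    ({j | F ∙ c i j ≠ F ∙ c i' j} : Finset κ).card + 2 ≤ Fintype.card ι := by
  obtain ⟨B, hcard, hB⟩ := exists_linearIndepOn_partialGate hc i i' Finset.univ
    (isConnectedFamily_of_minimal_sum_eq_zero hzero hmin)
  have hBuniv : B ≠ Finset.univ := by
    rintro rfl
    exact one_ne_zero <| linearIndepOn_finset_iff.1 hB (fun _ => 1) (by simpa only [one_smul]) i
      (Finset.mem_univ i)
  have hBcard := (Finset.card_lt_iff_ne_univ B).2 hBuniv
  omega

end Gates

open scoped Classical in
theorem stmt_1_general {F ι κ : Type*} [Field F] [Fintype ι] [Fintype κ] {σ : κ → Type*}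
    [∀ j, Fintype (σ j)] {c : ι → ∀ j, σ j → F} (hc : ∀ i j, c i j ≠ 0)
    {T : ι → MvPolynomial (Σ j, σ j) F} (hT : ∀ i, T i = ∏ j, ∑ t, C (c i j t) * X ⟨j, t⟩)
    (hmin : ∀ U : Finset ι, U.Nonempty → U ≠ Finset.univ → ∑ i ∈ U, T i ≠ 0)
    (hzero : ∑ i, T i = 0) (i j : ι) :
    ∃ g, g ∣ T i ∧ g ∣ T j ∧
      max (T i).totalDegree (T j).totalDegree + 2 ≤ g.totalDegree + Fintype.card ι := by
  obtain rfl : T = fun i => partialGate (c i) Finset.univ := by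
    funext i
    simp only [hT, partialGate, linearForm_eq_sum]
  refine ⟨partialGate (c i) {p | F ∙ c i p = F ∙ c j p},
    partialGate_dvd_partialGate (Finset.subset_univ _) fun _ _ => rfl,
    partialGate_dvd_partialGate (Finset.subset_univ _) fun p hp => (Finset.mem_filter.1 hp).2, ?_⟩
  have hdist := card_nonproportional_add_two_le hc hmin hzero i j
  have hsplit := Finset.card_filter_add_card_filter_not (s := Finset.univ)
    fun p => F ∙ c i p = F ∙ c j p
  simp only [totalDegree_partialGate (hc _), max_self, ne_eq] at hdist ⊢
  omega

/-- In a minimal set-multilinear ΣΠΣ(k) circuit computing the zero polynomial,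
for all i ≠ j the distance `max(deg T_i, deg T_j) − deg(gcd(T_i,T_j))` is at most k − 2.
Since in the UFD F[X] every common divisor divides the gcd (and degree is monotone under
divisibility of nonzero polynomials), `max(deg T_i, deg T_j) − deg(gcd) ≤ k − 2` is expressed
equivalently as: there is a common divisor g of T_i and T_j with
`max(deg T_i, deg T_j) − deg g ≤ k − 2`. -/
theorem stmt_1 {F : Type*} [Field F] {d k : ℕ} (hd : 1 ≤ d)
    {n : Fin d → ℕ}
    (c : Fin k → (j : Fin d) → Fin (n j) → F)
    (hc : ∀ i j, c i j ≠ 0)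
    (T : Fin k → MvPolynomial ((j : Fin d) × Fin (n j)) F)
    (hT : ∀ i, T i = ∏ j : Fin d, ∑ t : Fin (n j), C (c i j t) * X ⟨j, t⟩)
    (hmin : ∀ U : Finset (Fin k), U.Nonempty → U ≠ Finset.univ → (∑ i ∈ U, T i) ≠ 0)
    (hzero : (∑ i, T i) = 0) :
    ∀ i j : Fin k, i ≠ j →
      ∃ g : MvPolynomial ((j : Fin d) × Fin (n j)) F, g ∣ T i ∧ g ∣ T j ∧
        max (T i).totalDegree (T j).totalDegree - g.totalDegree ≤ k - 2 := by
  intro i j _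
  obtain ⟨g, hgi, hgj, hdeg⟩ := stmt_1_general hc hT hmin hzero i j
  rw [Fintype.card_fin] at hdeg
  exact ⟨g, hgi, hgj, by omega⟩
end

section
/- Let C = T_1 + ⋯ + T_k and C' = T'_1 + ⋯ + T'_{k'} be two set-multilinear ΣΠΣ circuits with respect to the same partition X = X_1 ⊔ ⋯ ⊔ X_d, computing the same polynomial, with k' ≤ k. Suppose C is minimal, i.e., no nonempty subset of its gates sums to the zero polynomial. Then for each gate T_i of C there exists a gate T'_j of C' such that max(deg T_i, deg T'_j) − deg(gcd(T_i, T'_j)) ≤ k + k' − 2. -/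
open MvPolynomial

/-!
Move all gates to one side and pick a minimal vanishing subsum containing the given gate; by
minimality of `C` it also contains a gate of `C'`. It remains to show that in a minimal vanishing
sum of `m` gates at most `m - 2` blocks carry non-proportional linear forms.

View each coefficient of the linear forms in block `j` as a function of the gate, and let `A j` be
the span of these functions inside the algebra `K ^ m`. The sum vanishes exactly when the vector of
scalars of the gates is orthogonal to `V = ∏ j, A j`, so `dim V ≤ m - 1`. If a nonconstant `μ`
satisfied `μ * V ≤ V`, then interpolation would give the indicator of a fibre of `μ` the same
property, and the sum over this fibre would vanish, against minimality; hence `V` is stabilized by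
the constants only. When `A` contains a unit, `dim (A * B) = dim B` forces `A` to be a line unless
`A * B` has nonconstant stabilizers. So every `A j` of dimension at least two raises the dimension
of the product, and `V` has dimension greater than the number of such blocks.
-/

namespace SetMultilinear

section Algebra

lemma div_self_le_mul_div_self {R E : Type*} [CommSemiring R] [CommSemiring E] [Algebra R E]
    (A B : Submodule R E) : B / B ≤ (A * B) / (A * B) := by
  rw [Submodule.le_div_iff_mul_le, mul_left_comm]
  exact mul_le_mul' le_rfl (Submodule.le_div_iff_mul_le.1 le_rfl)

lemma span_singleton_mul_le_mul {R E : Type*} [CommSemiring R] [CommSemiring E] [Algebra R E]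
    {A : Submodule R E} {x : E} (hx : x ∈ A) (B : Submodule R E) :
    Submodule.span R {x} * B ≤ A * B :=
  mul_le_mul' ((Submodule.span_singleton_le_iff_mem _ _).2 hx) le_rfl

variable {K E : Type*} [Field K] [CommRing E] [Algebra K E]

lemma finrank_span_unit_mul (u : Eˣ) (B : Submodule K E) :
    Module.finrank K ↥(Submodule.span K {(u : E)} * B) = Module.finrank K B := by
  have hmap : Submodule.span K {(u : E)} * B = B.map (u.mulLeftLinearEquiv K E : E →ₗ[K] E) := by
    ext x
    simp [Submodule.mem_span_singleton_mul]
  rw [hmap, LinearEquiv.finrank_map_eq]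

variable [FiniteDimensional K E]

lemma finrank_le_finrank_mul {A : Submodule K E} {u : Eˣ} (hu : (u : E) ∈ A)
    (B : Submodule K E) : Module.finrank K B ≤ Module.finrank K ↥(A * B) :=
  finrank_span_unit_mul u B ▸ Submodule.finrank_mono (span_singleton_mul_le_mul hu B)

lemma finrank_lt_finrank_mul {A B : Submodule K E} {u : Eˣ} (hu : (u : E) ∈ A)
    (hA : 1 < Module.finrank K A) (hAB : (A * B) / (A * B) ≤ 1) :
    Module.finrank K B < Module.finrank K ↥(A * B) := by
  -- If the dimensions agree then `A * B = u * B`, so `u⁻¹ * A` stabilizes `B`, hence `A * B`.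
  refine (finrank_le_finrank_mul hu B).lt_of_ne fun hrank => hA.not_ge ?_
  have huB : Submodule.span K {(u : E)} * B = A * B :=
    Submodule.eq_of_le_of_finrank_eq (span_singleton_mul_le_mul hu B)
      ((finrank_span_unit_mul u B).trans hrank)
  have hinv : Submodule.span K {(u : E)} * Submodule.span K {(↑u⁻¹ : E)} = 1 := by
    rw [Submodule.span_mul_span, Set.singleton_mul_singleton, Units.mul_inv,
      Submodule.one_eq_span]
  have hstab : Submodule.span K {(↑u⁻¹ : E)} * A ≤ B / B := by
    rw [Submodule.le_div_iff_mul_le, mul_assoc, ← huB, ← mul_assoc, mul_comm (Submodule.span K _),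
      hinv, one_mul]
  have hle : A ≤ Submodule.span K {(u : E)} := calc
    A = Submodule.span K {(u : E)} * (Submodule.span K {(↑u⁻¹ : E)} * A) := by
      rw [← mul_assoc, hinv, one_mul]
    _ ≤ Submodule.span K {(u : E)} * 1 :=
      mul_le_mul' le_rfl (hstab.trans ((div_self_le_mul_div_self A B).trans hAB))
    _ = Submodule.span K {(u : E)} := mul_one _
  exact (Submodule.finrank_mono hle).trans ((finrank_span_le_card _).trans (by simp))

lemma card_filter_one_lt_finrank_lt_finrank_prod [Nontrivial E] {J : Type*} {A : J → Submodule K E}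
    (hA : ∀ j, ∃ u : Eˣ, (u : E) ∈ A j) (s : Finset J)
    (hs : (∏ j ∈ s, A j) / (∏ j ∈ s, A j) ≤ 1) :
    (s.filter fun j => 1 < Module.finrank K (A j)).card <
      Module.finrank K ↥(∏ j ∈ s, A j) := by
  classical
  induction s using Finset.induction_on with
  | empty =>
    rw [Finset.filter_empty, Finset.card_empty, Finset.prod_empty, Submodule.one_eq_span,
      finrank_span_singleton one_ne_zero]
    exact one_pos
  | insert j s hj ih =>
    rw [Finset.prod_insert hj] at hs ⊢
    have ih := ih ((div_self_le_mul_div_self _ _).trans hs)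
    obtain ⟨u, hu⟩ := hA j
    by_cases hrank : 1 < Module.finrank K (A j)
    · rw [Finset.filter_insert, if_pos hrank, Finset.card_insert_of_notMem (by simp [hj])]
      exact (Nat.succ_le_of_lt ih).trans_lt (finrank_lt_finrank_mul hu hrank hs)
    · rw [Finset.filter_insert, if_neg hrank]
      exact ih.trans_le (finrank_le_finrank_mul hu _)

end Algebra

section Functions

variable {K ι : Type*} [Field K]

lemma indicator_preimage_singleton_mem [Finite ι] (S : Subalgebra K (ι → K)) {μ : ι → K}
    (hμ : μ ∈ S) (w : K) : (μ ⁻¹' {w}).indicator 1 ∈ S := by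
  classical
  have := Fintype.ofFinite ι
  have hprod : (μ ⁻¹' {w}).indicator 1 =
      ∏ x ∈ (Finset.univ.image μ).erase w, (w - x)⁻¹ • (μ - algebraMap K (ι → K) x) := by
    ext a
    rw [Finset.prod_apply]
    by_cases ha : μ a = w
    · rw [Set.indicator_of_mem (s := μ ⁻¹' {w}) ha, Finset.prod_eq_one]
      · rfl
      · intro x hx
        have : w - x ≠ 0 := sub_ne_zero.2 (Finset.ne_of_mem_erase hx).symm
        simp [ha, this]
    · rw [Set.indicator_of_notMem (s := μ ⁻¹' {w}) ha, Finset.prod_eq_zero (i := μ a)] <;> simp [ha]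
  rw [hprod]
  exact Subalgebra.prod_mem _ fun x _ =>
    S.smul_mem (S.sub_mem hμ (S.algebraMap_mem x)) _

lemma indicator_preimage_singleton_mem_div_self [Finite ι] (V : Submodule K (ι → K))
    {μ : ι → K} (hμ : μ ∈ V / V) (w : K) :
    (μ ⁻¹' {w}).indicator 1 ∈ V / V :=
  indicator_preimage_singleton_mem
    ((V / V).toSubalgebra (Submodule.one_mem_div.2 le_rfl) fun x y hx hy => by
      rw [Submodule.mem_div_iff_forall_mul_mem] at hx hy ⊢
      exact fun v hv => mul_assoc x y v ▸ hx _ (hy v hv)) hμ w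

lemma exists_unit_mem_of_forall_exists_ne_zero [Finite ι] [Infinite K]
    {A : Submodule K (ι → K)} (hA : ∀ a, ∃ x ∈ A, x a ≠ 0) :
    ∃ u : (ι → K)ˣ, (u : ι → K) ∈ A := by
  obtain ⟨x, hxA, hx⟩ :=
    Module.Dual.exists_forall_mem_ne_zero_of_forall_exists A (fun a => LinearMap.proj a) hA
  obtain ⟨u, rfl⟩ : IsUnit x := Pi.isUnit_iff.2 fun a => (hx a).isUnit
  exact ⟨u, hxA⟩

variable [Fintype ι]

lemma div_self_le_one_of_minimal {V : Submodule K (ι → K)} {β : ι → K}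
    (hmin : Minimal (fun U : Finset ι => U.Nonempty ∧ ∀ v ∈ V, ∑ a ∈ U, β a * v a = 0)
      Finset.univ) : V / V ≤ 1 := by
  classical
  intro μ hμ
  obtain ⟨a, -⟩ := hmin.prop.1
  have hfiber : Finset.univ.filter (fun b => μ b = μ a) = Finset.univ := by
    refine hmin.eq_of_le ⟨⟨a, by simp⟩, fun v hv => ?_⟩ (Finset.subset_univ _)
    have := hmin.prop.2 _
      (Submodule.mem_div_iff_forall_mul_mem.1
        (indicator_preimage_singleton_mem_div_self V hμ (μ a)) v hv)
    simpa [Finset.sum_filter, Set.indicator_apply] using this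
  refine Submodule.mem_one.2 ⟨μ a, ?_⟩
  ext b
  simpa using (Finset.filter_eq_self.1 hfiber b (Finset.mem_univ b)).symm

lemma finrank_lt_card_of_forall_sum_mul_eq_zero {V : Submodule K (ι → K)} {β : ι → K}
    (hβ : β ≠ 0) (hV : ∀ v ∈ V, ∑ a, β a * v a = 0) :
    Module.finrank K V < Fintype.card ι := by
  classical
  obtain ⟨a, ha⟩ := Function.ne_iff.1 hβ
  have hne : V ≠ ⊤ := by
    rintro rfl
    exact ha (by simpa [Pi.single_apply] using hV (Pi.single a 1) trivial)
  simpa using Submodule.finrank_lt hne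

end Functions

section MinimalZeroSum

variable {κ M : Type*}

/-- `S` is a nonempty set of indices over which `f` sums to zero, minimal with this property. For
`f` listing the gates of a circuit this says that `S` is a minimal identity. -/
def IsMinimalZeroSum [AddCommMonoid M] (f : κ → M) (S : Finset κ) : Prop :=
  Minimal (fun U : Finset κ => U.Nonempty ∧ ∑ a ∈ U, f a = 0) S

lemma IsMinimalZeroSum.subtype_univ [AddCommMonoid M] {f : κ → M} {S : Finset κ}
    (h : IsMinimalZeroSum f S) : IsMinimalZeroSum (fun a : S => f a) Finset.univ := by
  refine ⟨⟨h.prop.1.attach, (S.sum_coe_sort f).trans h.prop.2⟩, fun U hU _ a _ => ?_⟩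
  have hle : U.map (Function.Embedding.subtype _) ≤ S := Finset.map_subtype_subset U
  have hsum : ∑ a ∈ U.map (Function.Embedding.subtype _), f a = 0 := by
    rw [Finset.sum_map]
    exact hU.2
  simpa using h.le_of_le ⟨hU.1.map, hsum⟩ hle a.2

lemma exists_isMinimalZeroSum_of_sum_eq_zero [AddCommGroup M] {f : κ → M} {S : Finset κ}
    (hS : ∑ a ∈ S, f a = 0) {a : κ} (ha : a ∈ S) : ∃ U ⊆ S, a ∈ U ∧ IsMinimalZeroSum f U := by
  classical
  obtain ⟨U, hUS, hU⟩ := exists_minimal_le_of_wellFoundedLT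
    (fun U : Finset κ => a ∈ U ∧ ∑ b ∈ U, f b = 0) S ⟨ha, hS⟩
  refine ⟨U, hUS, hU.prop.1, ⟨⟨a, hU.prop.1⟩, hU.prop.2⟩, fun W hW hWU => ?_⟩
  by_cases haW : a ∈ W
  · exact hU.le_of_le ⟨haW, hW.2⟩ hWU
  · have hsum : ∑ b ∈ U \ W, f b = 0 := by
      rw [Finset.sum_sdiff_eq_sub hWU, hU.prop.2, hW.2, sub_zero]
    have hsub : U ⊆ U \ W :=
      hU.le_of_le ⟨Finset.mem_sdiff.2 ⟨hU.prop.1, haW⟩, hsum⟩ Finset.sdiff_subset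
    obtain ⟨b, hb⟩ := hW.1
    exact absurd hb (Finset.mem_sdiff.1 (hsub (hWU hb))).2

lemma exists_isMinimalZeroSum_inl_mem_inr_mem [AddCommGroup M] {ι ι' : Type*} [Fintype ι]
    [Fintype ι'] {f : ι → M} {f' : ι' → M} (hsame : ∑ i, f i = ∑ i, f' i)
    (hmin : ∀ U : Finset ι, U.Nonempty → ∑ i ∈ U, f i ≠ 0) (i : ι) :
    ∃ S j, Sum.inl i ∈ S ∧ Sum.inr j ∈ S ∧ IsMinimalZeroSum (Sum.elim f (-f')) S := by
  obtain ⟨S, -, hi, hS⟩ := exists_isMinimalZeroSum_of_sum_eq_zero (f := Sum.elim f (-f'))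
    (S := Finset.univ) (by simp [hsame]) (Finset.mem_univ (Sum.inl i))
  obtain ⟨j, hj⟩ : S.toRight.Nonempty := by
    by_contra hempty
    refine hmin S.toLeft ⟨i, Finset.mem_toLeft.2 hi⟩ ?_
    simpa [Finset.sum_sum_eq_sum_toLeft_add_sum_toRight,
      Finset.not_nonempty_iff_eq_empty.1 hempty] using hS.prop.2
  exact ⟨S, j, hi, Finset.mem_toRight.1 hj, hS⟩

end MinimalZeroSum

section Gates

variable {R J : Type*} [CommRing R] {σ : J → Type*}

/-- Two coefficient vectors are proportional when all their `2 × 2` minors vanish; for nonzero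
vectors over a field this says that the linear forms coincide up to a scalar. -/
def Proportional {τ : Type*} (v w : τ → R) : Prop := ∀ s t, v s * w t = v t * w s

variable [∀ j, Fintype (σ j)]

/-- The linear form in the `j`-th block of variables with coefficient vector `v`. -/
noncomputable def linearForm (j : J) (v : σ j → R) : MvPolynomial ((j : J) × σ j) R :=
  ∑ t, C (v t) * X ⟨j, t⟩

lemma isHomogeneous_linearForm (j : J) (v : σ j → R) : (linearForm j v).IsHomogeneous 1 :=
  IsHomogeneous.sum _ _ _ fun _ _ => isHomogeneous_C_mul_X _ _

lemma linearForm_ne_zero {j : J} {v : σ j → R} (hv : v ≠ 0) : linearForm j v ≠ 0 := by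
  classical
  obtain ⟨s, hs⟩ := Function.ne_iff.1 hv
  intro h
  apply hs
  simpa [linearForm, Pi.single_apply] using congrArg (eval (Pi.single ⟨j, s⟩ 1)) h

lemma Proportional.linearForm_dvd {F : Type*} [Field F] {j : J} {v w : σ j → F}
    (h : Proportional v w) (hv : v ≠ 0) : linearForm j v ∣ linearForm j w := by
  obtain ⟨s, hs⟩ := Function.ne_iff.1 hv
  have hw : ∀ t, w t = v t * (w s / v s) := fun t => by
    rw [mul_div_assoc', eq_div_iff hs, ← h s t, mul_comm]
  refine ⟨C (w s / v s), ?_⟩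
  rw [linearForm, linearForm, Finset.sum_mul]
  refine Finset.sum_congr rfl fun t _ => ?_
  rw [hw t, C_mul, mul_right_comm]

lemma totalDegree_prod_linearForm [IsDomain R] {v : ∀ j, σ j → R} (hv : ∀ j, v j ≠ 0)
    (s : Finset J) : (∏ j ∈ s, linearForm j (v j)).totalDegree = s.card := by
  have hhom : (∏ j ∈ s, linearForm j (v j)).IsHomogeneous (∑ _j ∈ s, 1) :=
    IsHomogeneous.prod s _ _ fun j _ => isHomogeneous_linearForm j (v j)
  rw [hhom.totalDegree (Finset.prod_ne_zero_iff.2 fun j _ => linearForm_ne_zero (hv j)),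
    Finset.card_eq_sum_ones]

variable [Fintype J]

/-- The multiplication gate of a set-multilinear circuit whose `j`-th factor is the linear form with
coefficients `v j`. -/
noncomputable def gate (v : ∀ j, σ j → R) : MvPolynomial ((j : J) × σ j) R :=
  ∏ j, linearForm j (v j)

lemma map_gate {S : Type*} [CommRing S] (f : R →+* S) (v : ∀ j, σ j → R) :
    map f (gate v) = gate fun j t => f (v j t) := by
  simp [gate, linearForm]

lemma totalDegree_gate [IsDomain R] {v : ∀ j, σ j → R} (hv : ∀ j, v j ≠ 0) :
    (gate v).totalDegree = Fintype.card J :=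
  totalDegree_prod_linearForm hv _

lemma eval_single_gate [∀ j, DecidableEq (σ j)] (v : ∀ j, σ j → R) (t : ∀ j, σ j) :
    eval (fun x => Pi.single (M := fun _ => R) (t x.1) 1 x.2) (gate v) = ∏ j, v j (t j) := by
  simp [gate, linearForm, Pi.single_apply]

lemma gate_eq_sum [DecidableEq J] (v : ∀ j, σ j → R) :
    gate v = ∑ t : ∀ j, σ j, C (∏ j, v j (t j)) * ∏ j, X ⟨j, t j⟩ := by
  simp only [gate, linearForm, Finset.prod_univ_sum, Fintype.piFinset_univ, Finset.prod_mul_distrib,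
    map_prod]

variable {ι : Type*}

lemma sum_C_mul_gate_eq_zero_iff (c : ι → ∀ j, σ j → R) (β : ι → R) (U : Finset ι) :
    ∑ a ∈ U, C (β a) * gate (c a) = 0 ↔
      ∀ t : ∀ j, σ j, ∑ a ∈ U, β a * ∏ j, c a j (t j) = 0 := by
  classical
  refine ⟨fun h t => ?_, fun h => ?_⟩
  · simpa [eval_single_gate] using
      congrArg (eval fun x => Pi.single (M := fun _ => R) (t x.1) 1 x.2) h
  · simp only [gate_eq_sum, Finset.mul_sum, ← mul_assoc, ← C_mul]
    rw [Finset.sum_comm]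
    refine Finset.sum_eq_zero fun t _ => ?_
    rw [← Finset.sum_mul, ← map_sum, h t, C_0, zero_mul]

end Gates

section CoeffSpan

variable {R K ι J : Type*} [CommRing R] [Field K] {σ : J → Type*}

/-- The space of functions on the gates spanned by the coefficients of the linear forms in the
`j`-th block, each coefficient being viewed as a function of the gate. -/
def coeffSpan (c : ι → ∀ j, σ j → R) (j : J) : Submodule R (ι → R) :=
  Submodule.span R (Set.range fun t a => c a j t)

lemma prod_coeffSpan [Fintype J] (c : ι → ∀ j, σ j → R) :
    ∏ j, coeffSpan c j =
      Submodule.span R (Set.range fun (t : ∀ j, σ j) a => ∏ j, c a j (t j)) := by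
  simp only [coeffSpan, Submodule.prod_span]
  congr 1
  ext x
  simp only [Set.mem_fintype_prod, Set.mem_range]
  constructor
  · rintro ⟨g, hg, rfl⟩
    choose t ht using fun j => hg (i := j)
    exact ⟨t, funext fun a => by simp [← ht]⟩
  · rintro ⟨t, rfl⟩
    exact ⟨fun j a => c a j (t j), fun {j} => ⟨t j, rfl⟩, funext fun a => Finset.prod_apply _ _ _⟩

lemma sum_C_mul_gate_eq_zero_iff_forall_mem_prod [Fintype J] [∀ j, Fintype (σ j)]
    (c : ι → ∀ j, σ j → R) (β : ι → R) (U : Finset ι) :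
    ∑ a ∈ U, C (β a) * gate (c a) = 0 ↔
      ∀ v ∈ ∏ j, coeffSpan c j, ∑ a ∈ U, β a * v a = 0 := by
  rw [sum_C_mul_gate_eq_zero_iff, prod_coeffSpan]
  have hspan := Submodule.span_le (s := Set.range fun (t : ∀ j, σ j) a => ∏ j, c a j (t j))
    (p := LinearMap.ker (∑ a ∈ U, β a • LinearMap.proj (R := R) (φ := fun _ => R) a))
  simpa [SetLike.le_def, Set.range_subset_iff] using hspan.symm

lemma exists_unit_mem_coeffSpan [Finite ι] [Infinite K] {c : ι → ∀ j, σ j → K}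
    (hc : ∀ a j, c a j ≠ 0) (j : J) : ∃ u : (ι → K)ˣ, (u : ι → K) ∈ coeffSpan c j :=
  exists_unit_mem_of_forall_exists_ne_zero fun a =>
    let ⟨t, ht⟩ := Function.ne_iff.1 (hc a j)
    ⟨_, Submodule.subset_span ⟨t, rfl⟩, ht⟩

lemma one_lt_finrank_coeffSpan [Finite ι] {c : ι → ∀ j, σ j → K} {j : J} {a b : ι}
    (h : ¬ Proportional (c a j) (c b j)) : 1 < Module.finrank K (coeffSpan c j) := by
  contrapose! h
  obtain ⟨x, hx⟩ := finrank_le_one_iff.1 h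
  have hmul : ∀ t, ∃ r : K, ∀ a, c a j t = r * x.1 a := fun t =>
    let ⟨r, hr⟩ := hx ⟨_, Submodule.subset_span ⟨t, rfl⟩⟩
    ⟨r, fun a => (congrFun (congrArg Subtype.val hr) a).symm⟩
  intro s t
  obtain ⟨r, hr⟩ := hmul s
  obtain ⟨r', hr'⟩ := hmul t
  rw [hr, hr, hr', hr']
  ring

end CoeffSpan

section Rank

variable {K ι J : Type*} [Field K] [Fintype ι] [Fintype J] {σ : J → Type*}
  [∀ j, Fintype (σ j)]

open scoped Classical in
lemma card_not_proportional_add_two_le_of_infinite [Infinite K] {c : ι → ∀ j, σ j → K}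
    (hc : ∀ a j, c a j ≠ 0) {β : ι → K} (hβ : β ≠ 0)
    (hmin : IsMinimalZeroSum (fun a => C (β a) * gate (c a)) Finset.univ) :
    (Finset.univ.filter fun j => ∃ a b, ¬ Proportional (c a j) (c b j)).card + 2 ≤
      Fintype.card ι := by
  simp only [IsMinimalZeroSum, sum_C_mul_gate_eq_zero_iff_forall_mem_prod] at hmin
  have : Nonempty ι := hmin.prop.1.to_type
  have hlower := card_filter_one_lt_finrank_lt_finrank_prod
    (exists_unit_mem_coeffSpan hc) Finset.univ (div_self_le_one_of_minimal hmin)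
  have hupper := finrank_lt_card_of_forall_sum_mul_eq_zero hβ hmin.prop.2
  have hsub : (Finset.univ.filter fun j => ∃ a b, ¬ Proportional (c a j) (c b j)).card ≤
      (Finset.univ.filter fun j => 1 < Module.finrank K (coeffSpan c j)).card :=
    Finset.card_le_card (Finset.monotone_filter_right _ fun j _ ⟨_, _, hj⟩ =>
      one_lt_finrank_coeffSpan hj)
  omega

open scoped Classical in
theorem card_not_proportional_add_two_le {c : ι → ∀ j, σ j → K} (hc : ∀ a j, c a j ≠ 0)
    {β : ι → K} (hβ : β ≠ 0)
    (hmin : IsMinimalZeroSum (fun a => C (β a) * gate (c a)) Finset.univ) :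
    (Finset.univ.filter fun j => ∃ a b, ¬ Proportional (c a j) (c b j)).card + 2 ≤
      Fintype.card ι := by
  -- Over an infinite field every `coeffSpan c j` contains a unit.
  let φ := algebraMap K (AlgebraicClosure K)
  have : Infinite (AlgebraicClosure K) := IsAlgClosed.instInfinite
  have hmap : ∀ U : Finset ι, ∑ a ∈ U, C (φ (β a)) * gate (fun j t => φ (c a j t)) = 0 ↔
      ∑ a ∈ U, C (β a) * gate (c a) = 0 := fun U => by
    rw [← map_eq_zero_iff _ (map_injective φ φ.injective)]
    simp only [map_sum, map_mul, map_C, map_gate]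
  have hprop : ∀ a b j, Proportional (fun t => φ (c a j t)) (fun t => φ (c b j t)) ↔
      Proportional (c a j) (c b j) := fun a b j => by
    simp only [Proportional, ← map_mul, φ.injective.eq_iff]
  have hbound := card_not_proportional_add_two_le_of_infinite
    (c := fun a j t => φ (c a j t)) (β := fun a => φ (β a))
    (fun a j h => hc a j (funext fun t => φ.injective (by simpa using congrFun h t)))
    (fun h => hβ (funext fun a => φ.injective (by simpa using congrFun h a)))
    (by simpa only [IsMinimalZeroSum, hmap] using hmin)
  simpa only [hprop] using hbound

end Rank

section Gcd

variable {F J : Type*} [Field F] [Fintype J] {σ : J → Type*} [∀ j, Fintype (σ j)]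

open scoped Classical in
lemma exists_dvd_gate_dvd_gate {v w : ∀ j, σ j → F} (hv : ∀ j, v j ≠ 0) (hw : ∀ j, w j ≠ 0) :
    ∃ g, g ∣ gate v ∧ g ∣ gate w ∧
      max (gate v).totalDegree (gate w).totalDegree - g.totalDegree =
        (Finset.univ.filter fun j => ¬ Proportional (v j) (w j)).card := by
  let P : Finset J := Finset.univ.filter fun j => Proportional (v j) (w j)
  refine ⟨∏ j ∈ P, linearForm j (v j), Finset.prod_dvd_prod_of_subset _ _ _ P.subset_univ, ?_, ?_⟩
  · exact (Finset.prod_dvd_prod_of_dvd _ _ fun j hj =>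
      (Finset.mem_filter.1 hj).2.linearForm_dvd (hv j)).trans
      (Finset.prod_dvd_prod_of_subset _ _ _ P.subset_univ)
  · rw [totalDegree_gate hv, totalDegree_gate hw, max_self, totalDegree_prod_linearForm hv,
      ← Finset.card_compl, Finset.compl_filter]

end Gcd

end SetMultilinear

open SetMultilinear

theorem stmt_2_general {F J ι ι' : Type*} [Field F] [Fintype J] [Fintype ι] [Fintype ι']
    {σ : J → Type*} [∀ j, Fintype (σ j)]
    (c : ι → (j : J) → σ j → F) (hc : ∀ i j, c i j ≠ 0)
    (c' : ι' → (j : J) → σ j → F) (hc' : ∀ i j, c' i j ≠ 0)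
    (hsame : ∑ i, gate (c i) = ∑ i, gate (c' i))
    (hmin : ∀ U : Finset ι, U.Nonempty → ∑ i ∈ U, gate (c i) ≠ 0) (i : ι) :
    ∃ j : ι', ∃ g, g ∣ gate (c i) ∧ g ∣ gate (c' j) ∧
      max (gate (c i)).totalDegree (gate (c' j)).totalDegree - g.totalDegree ≤
        Fintype.card ι + Fintype.card ι' - 2 := by
  classical
  obtain ⟨S, j, hi, hj, hS⟩ := exists_isMinimalZeroSum_inl_mem_inr_mem hsame hmin i
  obtain ⟨g, hgi, hgj, hg⟩ := exists_dvd_gate_dvd_gate (hc i) (hc' j)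
  refine ⟨j, g, hgi, hgj, hg.trans_le ?_⟩
  let e : ι ⊕ ι' → (j : J) → σ j → F := Sum.elim c c'
  let ε : ι ⊕ ι' → F := Sum.elim 1 (-1)
  have hgates : (Sum.elim (fun i => gate (c i)) (-fun i => gate (c' i))) =
      fun a => C (ε a) * gate (e a) := by
    ext1 (a | a) <;> simp [e, ε]
  have hbound := card_not_proportional_add_two_le (c := fun a : S => e a)
    (fun a => Sum.rec hc hc' a.1) (β := fun a : S => ε a)
    (fun h => one_ne_zero (congrFun h ⟨_, hi⟩)) (hgates ▸ hS).subtype_univ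
  have hfactors : (Finset.univ.filter fun l => ¬ Proportional (c i l) (c' j l)).card ≤
      (Finset.univ.filter fun l => ∃ a b : S, ¬ Proportional (e a l) (e b l)).card :=
    Finset.card_le_card (Finset.monotone_filter_right _ fun l _ h => ⟨⟨_, hi⟩, ⟨_, hj⟩, h⟩)
  have hcard : Fintype.card S ≤ Fintype.card ι + Fintype.card ι' := by
    simpa using S.card_le_univ
  omega

/-- If C = T_1 + ⋯ + T_k and C' = T'_1 + ⋯ + T'_{k'} are set-multilinear ΣΠΣ
circuits (same partition) computing the same polynomial, k' ≤ k, and C is minimal (no nonempty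
subset of its gates sums to zero), then every gate T_i of C has a gate T'_j of C' with
`max(deg T_i, deg T'_j) − deg(gcd(T_i,T'_j)) ≤ k + k' − 2`, expressed via a common divisor g
(equivalent since every common divisor divides the gcd in the UFD F[X]). -/
theorem stmt_2 {F : Type*} [Field F] {d k k' : ℕ} (hd : 1 ≤ d) (hkk : k' ≤ k)
    {n : Fin d → ℕ}
    (c : Fin k → (j : Fin d) → Fin (n j) → F) (hc : ∀ i j, c i j ≠ 0)
    (c' : Fin k' → (j : Fin d) → Fin (n j) → F) (hc' : ∀ i j, c' i j ≠ 0)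
    (T : Fin k → MvPolynomial ((j : Fin d) × Fin (n j)) F)
    (T' : Fin k' → MvPolynomial ((j : Fin d) × Fin (n j)) F)
    (hT : ∀ i, T i = ∏ j : Fin d, ∑ t : Fin (n j), C (c i j t) * X ⟨j, t⟩)
    (hT' : ∀ i, T' i = ∏ j : Fin d, ∑ t : Fin (n j), C (c' i j t) * X ⟨j, t⟩)
    (hsame : (∑ i, T i) = ∑ i, T' i)
    (hmin : ∀ U : Finset (Fin k), U.Nonempty → (∑ i ∈ U, T i) ≠ 0) :
    ∀ i : Fin k, ∃ j : Fin k', ∃ g : MvPolynomial ((j : Fin d) × Fin (n j)) F,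
      g ∣ T i ∧ g ∣ T' j ∧
      max (T i).totalDegree (T' j).totalDegree - g.totalDegree ≤ k + k' - 2 := by
  obtain rfl : T = fun i => gate (c i) := funext hT
  obtain rfl : T' = fun i => gate (c' i) := funext hT'
  simpa using stmt_2_general c hc c' hc' hsame hmin
end

section
/- Let f_1, …, f_k ∈ F[x_1,…,x_n] be F-linearly independent polynomials. Introduce k pairwise disjoint blocks of fresh variables X_1, …, X_k, each block being a copy of (x_1,…,x_n), and let Q be the k×k matrix over the polynomial ring F[X_1,…,X_k] whose (i,j) entry is f_j evaluated at the variable block X_i. Then det(Q) is a nonzero polynomial. -/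
open MvPolynomial

/-!
Linearly independent functions `g₁, …, gₖ : X → R` admit points `x₁, …, xₖ` with
`det (gⱼ (xᵢ)) ≠ 0`: otherwise the expansion along the first row is, for all fixed `x₂, …, xₖ`, a
linear relation in `x₁` between the `gⱼ`, so all the minors vanish, contradicting induction on `k`.

Apply this to the coefficient functions `m ↦ coeff m fⱼ`. Row `i` of `Q` involves only the
variables of the `i`-th block, so the coefficient of `X₁^m₁ ⋯ Xₖ^mₖ` in `det Q` is
`det (coeff mᵢ fⱼ)`, which is nonzero for suitable exponents `m₁, …, mₖ`.
-/

section LinearIndependentFunctions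

variable {R X : Type*} [CommRing R] [Nontrivial R]

theorem exists_det_ne_zero_of_linearIndependent_fin {k : ℕ} {g : Fin k → X → R}
    (hg : LinearIndependent R g) :
    ∃ x : Fin k → X, (Matrix.of fun i j => g j (x i)).det ≠ 0 := by
  induction k with
  | zero => exact ⟨Fin.elim0, by simp⟩
  | succ k ih =>
    obtain ⟨x, hx⟩ := ih (hg.comp _ (Fin.succ_injective k))
    by_contra! hdet
    let minor (j : Fin (k + 1)) : R := (Matrix.of fun i l => g (j.succAbove l) (x i)).det
    have relation : ∑ j : Fin (k + 1), ((-1) ^ (j : ℕ) * minor j) • g j = 0 := by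
      funext y
      have expansion := hdet (Fin.cons y x)
      rw [Matrix.det_succ_row_zero] at expansion
      simpa [minor, Matrix.submatrix, mul_right_comm] using expansion
    have minor_zero : minor 0 = 0 := by
      simpa using Fintype.linearIndependent_iff.1 hg _ relation 0
    exact hx (by simpa [minor] using minor_zero)

theorem exists_det_ne_zero_of_linearIndependent {ι : Type*} [Fintype ι] [DecidableEq ι]
    {g : ι → X → R} (hg : LinearIndependent R g) :
    ∃ x : ι → X, (Matrix.of fun i j => g j (x i)).det ≠ 0 := by
  let e := Fintype.equivFin ι
  obtain ⟨x, hx⟩ := exists_det_ne_zero_of_linearIndependent_fin (hg.comp _ e.symm.injective)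
  refine ⟨x ∘ e, ?_⟩
  rw [← Matrix.det_submatrix_equiv_self e.symm]
  simpa [Matrix.submatrix] using hx

end LinearIndependentFunctions

theorem linearIndependent_coeff {R ι σ : Type*} [CommSemiring R] {f : ι → MvPolynomial σ R}
    (hf : LinearIndependent R f) :
    LinearIndependent R fun j (m : σ →₀ ℕ) => coeff m (f j) := by
  refine hf.map_injOn (LinearMap.pi (lcoeff R)) fun p _ q _ hpq => ?_
  exact MvPolynomial.ext p q (congrFun hpq)

section DisjointBlocks

variable {ι σ R : Type*} [Fintype ι]

theorem curry_sum_mapDomain_prodMk {M : Type*} [AddCommMonoid M] (d : ι → σ →₀ M) (i : ι) :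
    (∑ j, (d j).mapDomain (Prod.mk j)).curry i = d i := by
  classical
  ext t
  rw [Finsupp.curry_apply, Finsupp.finsetSum_apply, Finset.sum_eq_single_of_mem i (by simp)]
  · exact Finsupp.mapDomain_apply (Prod.mk_right_injective i) _ _
  · rintro j - hji
    exact Finsupp.mapDomain_of_notMem_range _ _ (by simp [hji])

theorem sum_mapDomain_prodMk_eq_iff {M : Type*} [AddCommMonoid M] (d : ι → σ →₀ M)
    (D : ι × σ →₀ M) :
    ∑ i, (d i).mapDomain (Prod.mk i) = D ↔ ∀ i, d i = D.curry i := by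
  rw [← Finsupp.curryEquiv.injective.eq_iff]
  simp [Finsupp.curryEquiv, Finsupp.ext_iff (f := Finsupp.curry _), curry_sum_mapDomain_prodMk]

theorem coeff_prod_rename_prodMk [CommSemiring R] (p : ι → MvPolynomial σ R) (D : ι × σ →₀ ℕ) :
    coeff D (∏ i, rename (Prod.mk i) (p i)) = ∏ i, coeff (D.curry i) (p i) := by
  classical
  let coeffOfProd : MultilinearMap R (fun _ : ι => MvPolynomial σ R) R :=
    (lcoeff R D).compMultilinearMap ((MultilinearMap.mkPiAlgebra R ι _).compLinearMap
      fun i => (rename (Prod.mk i)).toLinearMap)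
  let prodOfCoeffs : MultilinearMap R (fun _ : ι => MvPolynomial σ R) R :=
    (MultilinearMap.mkPiAlgebra R ι R).compLinearMap fun i => lcoeff R (D.curry i)
  suffices coeffOfProd = prodOfCoeffs by
    simpa [coeffOfProd, prodOfCoeffs] using DFunLike.congr_fun this p
  refine Module.Basis.ext_multilinear (fun _ => basisMonomials σ R) fun d => ?_
  simp [coeffOfProd, prodOfCoeffs, rename_monomial, ← monomial_sum_one, coeff_monomial,
    sum_mapDomain_prodMk_eq_iff, Finset.prod_ite_zero]

theorem coeff_det_rename_prodMk [CommRing R] [DecidableEq ι] (f : ι → MvPolynomial σ R)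
    (D : ι × σ →₀ ℕ) :
    coeff D (Matrix.of fun i j => rename (Prod.mk i) (f j)).det =
      (Matrix.of fun i j => coeff (D.curry i) (f j)).det := by
  rw [← Matrix.det_transpose, ← Matrix.det_transpose (Matrix.of fun i j => coeff _ _)]
  simp [Matrix.det_apply, coeff_sum, coeff_smul, coeff_prod_rename_prodMk]

end DisjointBlocks

theorem stmt_4_general {R ι σ : Type*} [CommRing R] [Nontrivial R] [Fintype ι] [DecidableEq ι]
    (f : ι → MvPolynomial σ R) (hind : LinearIndependent R f) :
    (Matrix.of fun i j : ι =>
        (rename (fun t : σ => ((i, t) : ι × σ)) (f j) : MvPolynomial (ι × σ) R)).det ≠ 0 := by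
  obtain ⟨m, hm⟩ := exists_det_ne_zero_of_linearIndependent (linearIndependent_coeff hind)
  let D : ι × σ →₀ ℕ := (Finsupp.equivFunOnFinite.symm m).uncurry
  intro hdet
  have hcoeff : (Matrix.of fun i j => coeff (D.curry i) (f j)).det = 0 := by
    rw [← coeff_det_rename_prodMk, hdet, coeff_zero]
  exact hm (by simpa [D] using hcoeff)

/-- For F-linearly independent polynomials f_1, …, f_k ∈ F[x_1,…,x_n], the
k×k matrix Q over F[X_1,…,X_k] (k disjoint fresh copies of the variables) with entries
Q_{ij} = f_j(X_i) has nonzero determinant. -/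
theorem stmt_4 {F : Type*} [Field F] {n k : ℕ}
    (f : Fin k → MvPolynomial (Fin n) F) (hind : LinearIndependent F f) :
    (Matrix.of fun i j : Fin k =>
        (rename (fun t : Fin n => ((i, t) : Fin k × Fin n)) (f j) :
          MvPolynomial (Fin k × Fin n) F)).det ≠ 0 :=
  stmt_4_general f hind
end

section
/- Let F be a field, let C ⊆ F[x_1,…,x_n] be a set of polynomials, let k ≥ 1, and let H ⊆ F^n be a set of points such that every nonzero polynomial of the form c_1 g_1 + ⋯ + c_k g_k with c_1,…,c_k ∈ F and g_1,…,g_k ∈ C has a nonzero evaluation at some point of H (i.e., H is a hitting set for F-linear combinations of at most k elements of C). Then for every choice of F-linearly independent polynomials f_1, …, f_k ∈ C, there exist points a_1, …, a_k ∈ H such that the k×k matrix with (i,j) entry f_j(a_i) is invertible. -/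
/-!
A hitting set `H` for the span of the `f j` separates the elements of that span, so the `f j` remain
linearly independent as functions on `H`. Row rank equals column rank: for finitely many linearly
independent functions, the evaluation vectors `(f j x)_j` span the whole coordinate space, and a
basis chosen among these vectors gives the rows of an invertible matrix.
-/

open Module Submodule

theorem exists_linearIndependent_comp_of_span_range_eq_top {K V X ι : Type*} [DivisionRing K]
    [AddCommGroup V] [Module K V] (b : Basis ι K V) {v : X → V} (hv : span K (Set.range v) = ⊤) :
    ∃ a : ι → X, LinearIndependent K (v ∘ a) := by
  obtain ⟨κ, s, -, hspan, hli⟩ := exists_linearIndependent' K v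
  let e : ι ≃ κ := b.indexEquiv (Basis.mk hli (hspan.trans hv).ge)
  exact ⟨s ∘ e, hli.comp e e.injective⟩

theorem exists_isUnit_matrixOf_apply {K X ι : Type*}
    [Field K] [Fintype ι] [DecidableEq ι] {f : ι → X → K} (hf : LinearIndependent K f) :
    ∃ a : ι → X, IsUnit (Matrix.of fun i j => f j (a i)) := by
  have hspan : span K (Set.range (flip f)) = ⊤ := span_flip_eq_top_iff_linearIndependent.mpr hf
  obtain ⟨a, ha⟩ := exists_linearIndependent_comp_of_span_range_eq_top (Pi.basisFun K ι) hspan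
  exact ⟨a, Matrix.linearIndependent_rows_iff_isUnit.mp ha⟩

/-- `H` is a hitting set for the family `P` of polynomials: every nonzero member of `P` has a
nonzero value at some point of `H`. -/
def IsHittingSet {R σ : Type*} [CommSemiring R] (H : Set (σ → R)) (P : Set (MvPolynomial σ R)) :
    Prop :=
  ∀ p ∈ P, p ≠ 0 → ∃ a ∈ H, MvPolynomial.eval a p ≠ 0

theorem IsHittingSet.linearIndependent_eval {R σ ι : Type*} [CommRing R] {H : Set (σ → R)}
    {f : ι → MvPolynomial σ R} (hH : IsHittingSet H (span R (Set.range f)))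
    (hf : LinearIndependent R f) :
    LinearIndependent R fun j (a : H) => MvPolynomial.eval a.1 (f j) := by
  let restrictEval : MvPolynomial σ R →ₗ[R] H → R :=
    LinearMap.funLeft R R Subtype.val ∘ₗ MvPolynomial.evalₗ R σ
  refine hf.map (f := restrictEval) (disjoint_def.mpr fun p hp hker => ?_)
  by_contra hp0
  obtain ⟨a, ha, hne⟩ := hH p hp hp0
  exact hne (congrFun (LinearMap.mem_ker.mp hker) ⟨a, ha⟩)

theorem stmt_6_general {F σ ι : Type*} [Field F] [Fintype ι] [DecidableEq ι] {H : Set (σ → F)}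
    {f : ι → MvPolynomial σ F} (hH : IsHittingSet H (span F (Set.range f)))
    (hf : LinearIndependent F f) :
    ∃ a : ι → σ → F, (∀ i, a i ∈ H) ∧
      IsUnit (Matrix.of fun i j => MvPolynomial.eval (a i) (f j)) := by
  obtain ⟨a, ha⟩ := exists_isUnit_matrixOf_apply (hH.linearIndependent_eval hf)
  exact ⟨fun i => a i, fun i => (a i).2, ha⟩

/-- If H is a hitting set for F-linear combinations of at most k elements of a
class 𝒞 ⊆ F[x_1,…,x_n] (every nonzero combination c_1 g_1 + ⋯ + c_k g_k with g_i ∈ 𝒞 has a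
nonzero evaluation on H), then for all F-linearly independent f_1, …, f_k ∈ 𝒞 there are points
a_1, …, a_k ∈ H making the matrix (f_j(a_i))_{ij} invertible. -/
theorem stmt_6 {F : Type*} [Field F] {n k : ℕ} (hk : 1 ≤ k)
    (𝒞 : Set (MvPolynomial (Fin n) F)) (H : Set (Fin n → F))
    (hH : ∀ (c : Fin k → F) (g : Fin k → MvPolynomial (Fin n) F),
      (∀ i, g i ∈ 𝒞) → (∑ i, MvPolynomial.C (c i) * g i) ≠ 0 →
      ∃ a ∈ H, MvPolynomial.eval a (∑ i, MvPolynomial.C (c i) * g i) ≠ 0)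
    (f : Fin k → MvPolynomial (Fin n) F) (hf : ∀ i, f i ∈ 𝒞)
    (hind : LinearIndependent F f) :
    ∃ a : Fin k → (Fin n → F), (∀ i, a i ∈ H) ∧
      IsUnit (Matrix.of fun i j : Fin k => MvPolynomial.eval (a i) (f j)) := by
  refine stmt_6_general (fun p hp hp0 => ?_) hind
  obtain ⟨c, rfl⟩ := (mem_span_range_iff_exists_fun F).mp hp
  simp only [MvPolynomial.smul_eq_C_mul] at hp0 ⊢
  exact hH c f hf hp0
end

section
/- Let f_1, …, f_m ∈ F[x_1,…,x_n] be polynomials of total degree at most d whose F-linear span has dimension k, and let S ⊆614 F be a finite nonempty set with S ⊆ F. If a_1, …, a_k are chosen independently and uniformly at random from S^n, then with probability at least 1 − (m choose k)·kd/|S| the following holds: for every λ = (λ_1,…,λ_m) ∈ F^m, one has λ_1 f_1 + ⋯ + λ_m f_m = 0 as a polynomial if and only if λ_1 f_1(a_i) + ⋯ + λ_m f_m(a_i) = 0 for all i ∈ {1,…,k}. In other words, the F-linear dependencies among the columns of the k×m evaluation matrix (f_j(a_i)) coincide exactly with the F-linear dependencies among f_1, …, f_m. -/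
open MvPolynomial
open scoped Classical

/-!
Pick the points one at a time, keeping track of the space of those combinations of the `f j` that
vanish at all points chosen so far. While this space contains a nonzero `p`, the Schwartz–Zippel
lemma shows that `p` does not vanish at the next point with probability at least `1 - d / #S`, and
then the rank of the space drops. So after `k` points only `0` is left with probability at least
`(1 - d / #S) ^ k ≥ 1 - k * d / #S` when `d ≤ #S`.
-/

section RankNullity

variable {R M : Type*} [CommRing R] [IsDomain R] [AddCommGroup M] [Module R M]

lemma rank_ker_add_one_le {φ : Module.Dual R M} (hφ : φ ≠ 0) :
    Module.rank R (LinearMap.ker φ) + 1 ≤ Module.rank R M := by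
  have : Nontrivial (LinearMap.range φ) :=
    Submodule.nontrivial_iff_ne_bot.mpr (mt LinearMap.range_eq_bot.mp hφ)
  have hrange : 1 ≤ Module.rank R (LinearMap.range φ) := Cardinal.one_le_iff_pos.mpr rank_pos
  rw [← Cardinal.lift_le, Cardinal.lift_add, Cardinal.lift_one,
    ← LinearMap.lift_rank_range_add_rank_ker φ, add_comm]
  gcongr
  exact Cardinal.one_le_lift_iff.mpr hrange

end RankNullity

section Unisolvent

variable {R M X ι : Type*} [CommRing R] [AddCommGroup M] [Module R M]

/-- A family of points `a` is unisolvent for a module `M` of functions if only `0 : M` vanishes at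
all of them. The functions enter through their evaluations `ev x : M → R` at points `x : X`, so that
restricting to a submodule of `M` just restricts these linear forms. -/
def Unisolvent (ev : X → Module.Dual R M) (a : ι → X) : Prop :=
  ∀ p, (∀ i, ev (a i) p = 0) → p = 0

lemma Unisolvent.of_subsingleton [Subsingleton M] (ev : X → Module.Dual R M) (a : ι → X) :
    Unisolvent ev a :=
  fun _ _ => Subsingleton.elim _ _

lemma Unisolvent.cons {k : ℕ} {ev : X → Module.Dual R M} {x : X} {a : Fin k → X}
    (ha : Unisolvent (fun y => (ev y).domRestrict (LinearMap.ker (ev x))) a) :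
    Unisolvent ev (Fin.cons x a : Fin (k + 1) → X) := by
  intro p hp
  have hpx : p ∈ LinearMap.ker (ev x) := hp 0
  exact congrArg Subtype.val (ha ⟨p, hpx⟩ fun i => hp i.succ)

lemma unisolvent_span_range_iff {κ : Type*} [Fintype κ] (v : κ → M) (ev : X → Module.Dual R M)
    (a : ι → X) :
    Unisolvent (fun x => (ev x).domRestrict (Submodule.span R (Set.range v))) a ↔
      ∀ c : κ → R, ∑ j, c j • v j = 0 ↔ ∀ i, ∑ j, c j * ev (a i) (v j) = 0 := by
  have hev (c : κ → R) (x : X) : ∑ j, c j * ev x (v j) = ev x (∑ j, c j • v j) := by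
    simp only [map_sum, map_smul, smul_eq_mul]
  simp only [hev]
  constructor
  · intro ha c
    refine ⟨fun hc i => by rw [hc, map_zero], fun hc => ?_⟩
    have hmem : ∑ j, c j • v j ∈ Submodule.span R (Set.range v) :=
      (Submodule.mem_span_range_iff_exists_fun R).mpr ⟨c, rfl⟩
    exact congrArg Subtype.val (ha ⟨_, hmem⟩ hc)
  · rintro h ⟨p, hp⟩ hpa
    obtain ⟨c, rfl⟩ := (Submodule.mem_span_range_iff_exists_fun R).mp hp
    exact Subtype.ext ((h c).mpr hpa)

lemma pow_le_card_filter_unisolvent [IsDomain R] [Module.IsTorsionFree R M] {k : ℕ}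
    (ev : X → Module.Dual R M) (T : Finset X) {b : ℝ} (hb₀ : 0 ≤ b) (hbT : b ≤ T.card)
    (hb : ∀ p ≠ 0, b ≤ (T.filter fun x => ev x p ≠ 0).card) (hM : Module.rank R M ≤ k) :
    b ^ k ≤ ((Fintype.piFinset fun _ : Fin k => T).filter (Unisolvent ev)).card := by
  induction k generalizing M with
  | zero =>
    have : Subsingleton M := rank_zero_iff.mp (nonpos_iff_eq_zero.mp (by simpa using hM))
    simp [Unisolvent.of_subsingleton]
  | succ k ih =>
    rcases subsingleton_or_nontrivial M with _ | _
    · simpa [Unisolvent.of_subsingleton] using pow_le_pow_left₀ hb₀ hbT (k + 1)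
    obtain ⟨p, hp⟩ := exists_ne (0 : M)
    let U := T.filter fun x => ev x p ≠ 0
    let G (x : X) := (Fintype.piFinset fun _ : Fin k => T).filter
      (Unisolvent fun y => (ev y).domRestrict (LinearMap.ker (ev x)))
    have hG : ∀ x ∈ U, b ^ k ≤ (G x).card := by
      intro x hx
      have hx₀ : ev x ≠ 0 := fun h => (Finset.mem_filter.mp hx).2 (by rw [h, LinearMap.zero_apply])
      refine ih _ (fun q hq => hb q (by simpa using hq)) ?_
      exact Cardinal.add_one_le_add_one_iff.mp ((rank_ker_add_one_le hx₀).trans (by simpa using hM))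
    have hcons : (U.sigma G).card ≤
        ((Fintype.piFinset fun _ : Fin (k + 1) => T).filter (Unisolvent ev)).card := by
      refine Finset.card_le_card_of_injOn (fun y => Fin.cons y.1 y.2) ?_ ?_
      · rintro ⟨x, a⟩ hxa
        obtain ⟨hx, ha⟩ := Finset.mem_sigma.mp hxa
        obtain ⟨haT, ha⟩ := Finset.mem_filter.mp ha
        refine Finset.mem_coe.mpr (Finset.mem_filter.mpr ⟨Fintype.mem_piFinset.mpr ?_, ha.cons⟩)
        exact Fin.cases (Finset.mem_filter.mp hx).1 (Fintype.mem_piFinset.mp haT)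
      · rintro ⟨x, a⟩ - ⟨y, c⟩ - h
        obtain ⟨rfl, rfl⟩ := Fin.cons_inj.mp h
        rfl
    calc b ^ (k + 1) = b * b ^ k := pow_succ' b k
      _ ≤ U.card * b ^ k := by gcongr; exact hb p hp
      _ = ∑ _x ∈ U, b ^ k := by rw [Finset.sum_const, nsmul_eq_mul]
      _ ≤ ∑ x ∈ U, ((G x).card : ℝ) := Finset.sum_le_sum hG
      _ = (U.sigma G).card := by rw [Finset.card_sigma, Nat.cast_sum]
      _ ≤ _ := by exact_mod_cast hcons

lemma one_sub_mul_mul_pow_le_card_filter_unisolvent [IsDomain R] [Module.IsTorsionFree R M] {k : ℕ}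
    (ev : X → Module.Dual R M) (T : Finset X) {ε : ℝ} (hε : 0 ≤ ε)
    (hT : ∀ p ≠ 0, (1 - ε) * T.card ≤ (T.filter fun x => ev x p ≠ 0).card)
    (hM : Module.rank R M ≤ k) :
    (1 - k * ε) * T.card ^ k ≤
      ((Fintype.piFinset fun _ : Fin k => T).filter (Unisolvent ev)).card := by
  -- `1 - ε` may be negative, in which case its powers are useless as lower bounds.
  set c : ℝ := max 0 (1 - ε)
  have hc₀ : 0 ≤ c := le_max_left _ _
  have hc₁ : c ≤ 1 := max_le zero_le_one (sub_le_self 1 hε)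
  have hcε : 1 - ε ≤ c := le_max_right _ _
  have hcT : ∀ p ≠ 0, c * T.card ≤ (T.filter fun x => ev x p ≠ 0).card := by
    intro p hp
    rw [max_mul_of_nonneg _ _ (Nat.cast_nonneg _), zero_mul]
    exact max_le (Nat.cast_nonneg _) (hT p hp)
  have bernoulli : 1 - k * ε ≤ c ^ k :=
    calc 1 - k * ε ≤ 1 + k * (c - 1) := by nlinarith [Nat.cast_nonneg (α := ℝ) k]
      _ ≤ c ^ k := one_add_mul_sub_le_pow (by linarith) k
  calc (1 - k * ε) * T.card ^ k ≤ c ^ k * T.card ^ k := by gcongr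
    _ = (c * T.card) ^ k := (mul_pow _ _ _).symm
    _ ≤ _ := pow_le_card_filter_unisolvent ev T (by positivity)
      (mul_le_of_le_one_left (Nat.cast_nonneg _) hc₁) hcT hM

end Unisolvent

section SchwartzZippel

variable {R σ : Type*} [CommRing R] [IsDomain R] [Fintype σ] [DecidableEq σ]

lemma card_filter_eval_eq_zero_mul_card_le {p : MvPolynomial σ R} (hp : p ≠ 0) (S : Finset R) :
    ((Fintype.piFinset fun _ : σ => S).filter fun x => eval x p = 0).card * S.card ≤
      p.totalDegree * (Fintype.piFinset fun _ : σ => S).card := by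
  rcases S.eq_empty_or_nonempty with rfl | hS
  · simp
  let e := Fintype.equivFin σ
  have hrename : rename e p ≠ 0 := (rename_injective e e.injective).ne_iff' (map_zero _) |>.mpr hp
  have hcard : ((Fintype.piFinset fun _ : σ => S).filter fun x => eval x p = 0).card =
      ((Fintype.piFinset fun _ : Fin (Fintype.card σ) => S).filter
        fun x => eval x (rename e p) = 0).card := by
    refine Finset.card_equiv (e.arrowCongr (Equiv.refl R)) fun x => ?_
    simp [eval_rename, Function.comp_def, e.symm.surjective.forall]
  have hSZ := schwartz_zippel_totalDegree hrename S
  have hS₀ : (0 : ℚ≥0) < S.card := by exact_mod_cast hS.card_pos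
  rw [div_le_div_iff₀ (by positivity) hS₀] at hSZ
  rw [hcard, Fintype.card_piFinset, Finset.prod_const, Finset.card_univ]
  calc _ ≤ (rename e p).totalDegree * S.card ^ Fintype.card σ := by exact_mod_cast hSZ
    _ ≤ _ := by gcongr; exact totalDegree_rename_le e p

lemma one_sub_mul_card_le_card_filter_eval_ne_zero {p : MvPolynomial σ R} (hp : p ≠ 0)
    {S : Finset R} (hS : S.Nonempty) :
    (1 - p.totalDegree / S.card : ℝ) * (Fintype.piFinset fun _ : σ => S).card ≤
      ((Fintype.piFinset fun _ : σ => S).filter fun x => eval x p ≠ 0).card := by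
  set T := Fintype.piFinset fun _ : σ => S
  have hS₀ : (0 : ℝ) < S.card := by exact_mod_cast hS.card_pos
  have hzeros : ((T.filter fun x => eval x p = 0).card : ℝ) ≤
      p.totalDegree / S.card * T.card := by
    rw [div_mul_eq_mul_div, le_div_iff₀ hS₀]
    exact_mod_cast card_filter_eval_eq_zero_mul_card_le hp S
  have hsplit : ((T.filter fun x => eval x p = 0).card : ℝ) +
      (T.filter fun x => eval x p ≠ 0).card = T.card := by
    exact_mod_cast T.card_filter_add_card_filter_not fun x => eval x p = 0
  linarith

end SchwartzZippel

section Span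

variable {R σ : Type*}

lemma totalDegree_le_of_mem_span [CommSemiring R] {s : Set (MvPolynomial σ R)} {d : ℕ}
    (hs : ∀ p ∈ s, p.totalDegree ≤ d) {p : MvPolynomial σ R} (hp : p ∈ Submodule.span R s) :
    p.totalDegree ≤ d := by
  have hle : Submodule.span R s ≤ restrictTotalDegree σ R d :=
    Submodule.span_le.mpr fun q hq => (mem_restrictTotalDegree σ d q).mpr (hs q hq)
  exact (mem_restrictTotalDegree σ d p).mp (hle hp)

/-- Evaluation of polynomials at the point `x`, as a linear form. It comes from the algebra
homomorphism `aeval x`, since the bundled `eval x` is only a ring homomorphism. -/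
noncomputable def evalForm [CommSemiring R] (x : σ → R) : Module.Dual R (MvPolynomial σ R) :=
  (aeval x).toLinearMap

lemma evalForm_apply [CommSemiring R] (x : σ → R) (p : MvPolynomial σ R) :
    evalForm x p = eval x p := by
  rw [evalForm, AlgHom.toLinearMap_apply, aeval_eq_eval]

lemma unisolvent_evalForm_span_range_iff [CommRing R] {ι κ : Type*} [Fintype κ]
    (f : κ → MvPolynomial σ R) (a : ι → σ → R) :
    Unisolvent (fun x => (evalForm x).domRestrict (Submodule.span R (Set.range f))) a ↔
      ∀ c : κ → R, ∑ j, C (c j) * f j = 0 ↔ ∀ i, ∑ j, c j * eval (a i) (f j) = 0 := by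
  simpa only [smul_eq_C_mul, evalForm_apply] using unisolvent_span_range_iff f evalForm a

end Span

theorem stmt_7_general {R σ ι : Type*} [CommRing R] [IsDomain R] [Fintype σ] [DecidableEq σ]
    [Fintype ι] {d k : ℕ} (f : ι → MvPolynomial σ R)
    (hdeg : ∀ j, (f j).totalDegree ≤ d)
    (hrank : Module.finrank R (Submodule.span R (Set.range f)) ≤ k)
    (S : Finset R) (hS : S.Nonempty) :
    (1 : ℝ) - (k * d : ℝ) / (S.card : ℝ)
      ≤ (((Fintype.piFinset fun _ : Fin k => Fintype.piFinset fun _ : σ => S).filter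
            (fun a : Fin k → σ → R =>
              ∀ c : ι → R,
                (∑ j, C (c j) * f j) = 0 ↔ ∀ i, (∑ j, c j * eval (a i) (f j)) = 0)).card : ℝ)
          / ((Fintype.piFinset fun _ : Fin k => Fintype.piFinset fun _ : σ => S).card : ℝ) := by
  set V := Submodule.span R (Set.range f)
  set T := Fintype.piFinset fun _ : σ => S
  have hT : (0 : ℝ) < T.card := by
    exact_mod_cast (Fintype.piFinset_nonempty.mpr fun _ => hS).card_pos
  have hnonzero : ∀ p : V, p ≠ 0 → (1 - d / S.card : ℝ) * T.card ≤
      (T.filter fun x => (evalForm x).domRestrict V p ≠ 0).card := by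
    intro p hp
    have hpd : p.1.totalDegree ≤ d := totalDegree_le_of_mem_span (Set.forall_mem_range.mpr hdeg) p.2
    simp only [LinearMap.domRestrict_apply, evalForm_apply]
    calc (1 - d / S.card : ℝ) * T.card ≤ (1 - p.1.totalDegree / S.card) * T.card := by gcongr
      _ ≤ _ := one_sub_mul_card_le_card_filter_eval_ne_zero (Subtype.coe_ne_coe.mpr hp) hS
  have : Module.Finite R V := Module.Finite.span_of_finite R (Set.finite_range f)
  have hV : Module.rank R V ≤ k := by
    rw [← Module.finrank_eq_rank]
    exact_mod_cast hrank
  have hcount := one_sub_mul_mul_pow_le_card_filter_unisolvent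
    (fun x => (evalForm x).domRestrict V) T (by positivity) hnonzero hV
  simp only [← unisolvent_evalForm_span_range_iff]
  rw [Fintype.card_piFinset_const, Nat.cast_pow, le_div_iff₀ (by positivity), mul_div_assoc]
  exact hcount

/-- Let f_1, …, f_m have total degree ≤ d and F-linear span of dimension k,
and let S ⊆ F be finite nonempty.  Choosing a_1, …, a_k independently and uniformly from S^n,
with probability at least 1 − (m choose k)·kd/|S| the F-linear dependencies among the columns of
the evaluation matrix (f_j(a_i)) coincide exactly with the dependencies among f_1, …, f_m:
for every λ ∈ F^m, Σ_j λ_j f_j = 0 (as a polynomial) iff Σ_j λ_j f_j(a_i) = 0 for all i. -/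
theorem stmt_7 {F : Type*} [Field F] {n m d k : ℕ}
    (f : Fin m → MvPolynomial (Fin n) F)
    (hdeg : ∀ j, (f j).totalDegree ≤ d)
    (hrank : Module.finrank F (Submodule.span F (Set.range f)) = k)
    (S : Finset F) (hS : S.Nonempty) :
    (1 : ℝ) - ((m.choose k) * (k * d) : ℝ) / (S.card : ℝ)
      ≤ (((Fintype.piFinset fun _ : Fin k => Fintype.piFinset fun _ : Fin n => S).filter
            (fun a : Fin k → Fin n → F =>
              ∀ lam : Fin m → F,
                (∑ j, C (lam j) * f j) = 0 ↔ ∀ i, (∑ j, lam j * eval (a i) (f j)) = 0)).card : ℝ)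
          / ((Fintype.piFinset fun _ : Fin k => Fintype.piFinset fun _ : Fin n => S).card : ℝ) := by
  have hkm : k ≤ m := hrank ▸ (finrank_range_le_card f).trans_eq (Fintype.card_fin m)
  have hchoose : (k * d : ℝ) ≤ m.choose k * (k * d) :=
    le_mul_of_one_le_left (by positivity) (by exact_mod_cast Nat.choose_pos hkm)
  exact (sub_le_sub_left (div_le_div_of_nonneg_right hchoose (Nat.cast_nonneg _)) 1).trans
    (stmt_7_general f hdeg hrank.le S hS)
end

section
/- Let C = T_1 + ⋯ + T_k, with T_i = ∏_{j=1}^d ℓ_{i,j} and ℓ_{i,j} a nonzero linear form in X_j, be a set-multilinear ΣΠΣ(k) circuit computing a polynomial f, and suppose f cannot be computed by any set-multilinear ΣΠΣ(k−1) circuit with respect to the same partition (i.e., C has optimal top fan-in). Then for every j ∈ {1,…,d}, the k polynomials T_1/ℓ_{1,j}, T_2/ℓ_{2,j}, …, T_k/ℓ_{k,j} are F-linearly independent. (Each T_i/ℓ_{i,j} is a polynomial since ℓ_{i,j} divides T_i.) -/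
open MvPolynomial

/-!
A gate of a set-multilinear circuit is a value of the multilinear map `φ` sending a tuple of
coefficient vectors to the product of their linear forms. A relation `∑ i, g i • T_i / ℓ_{i,j} = 0`
yields `∑ i, g i • φ (v i with j-th entry x) = 0` for all `x`, so replacing the `j`-th entry of
every `v i` by `v i j - g i • x` leaves `∑ i, φ (v i)` unchanged. If `g i₀ ≠ 0`, the choice
`x = (g i₀)⁻¹ • v i₀ j` makes the gate `i₀` vanish, and the number of gates was not minimal.
-/

section Decomposition

open Function

variable {R N ι κ : Type*} {M : ι → Type*}

/-- `f` is a sum of `k` values of the multilinear map `φ` at tuples of nonzero vectors. When `φ`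
multiplies linear forms in disjoint blocks of variables, given by their coefficient vectors, this
says that a set-multilinear ΣΠΣ(`k`) circuit computes `f`. -/
def HasDecomposition [Semiring R] [∀ j, AddCommMonoid (M j)] [∀ j, Module R (M j)]
    [AddCommMonoid N] [Module R N] (φ : MultilinearMap R M N) (k : ℕ) (f : N) : Prop :=
  ∃ v : Fin k → ∀ j, M j, (∀ i j, v i j ≠ 0) ∧ f = ∑ i, φ (v i)

theorem exists_hasDecomposition_lt_card_of_map_eq_zero [Semiring R] [∀ j, AddCommMonoid (M j)]
    [∀ j, Module R (M j)] [AddCommMonoid N] [Module R N] [Fintype κ]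
    (φ : MultilinearMap R M N) (v : κ → ∀ j, M j) {i₀ : κ} (hi₀ : φ (v i₀) = 0) :
    ∃ k < Fintype.card κ, HasDecomposition φ k (∑ i, φ (v i)) := by
  classical
  let e := Fintype.equivFin {i // φ (v i) ≠ 0}
  refine ⟨_, Fintype.card_subtype_lt (not_not.mpr hi₀), fun i => v (e.symm i),
    fun i j hij => (e.symm i).2 (φ.map_coord_zero j hij), ?_⟩
  calc ∑ i, φ (v i) = ∑ i with φ (v i) ≠ 0, φ (v i) := (Finset.sum_filter_ne_zero _).symm
    _ = ∑ i : {i // φ (v i) ≠ 0}, φ (v i) := Finset.sum_subtype _ (by simp) _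
    _ = ∑ i, φ (v (e.symm i)) := (e.symm.sum_comp fun i => φ (v i)).symm

theorem sum_map_update_sub_smul [Ring R] [∀ j, AddCommGroup (M j)] [∀ j, Module R (M j)]
    [AddCommGroup N] [Module R N] [DecidableEq ι] [Fintype κ] (φ : MultilinearMap R M N)
    (v : κ → ∀ j, M j) (g : κ → R) {j : ι} {x : M j}
    (hx : ∑ i, g i • φ (update (v i) j x) = 0) :
    ∑ i, φ (update (v i) j (v i j - g i • x)) = ∑ i, φ (v i) := by
  simp only [φ.map_update_sub, φ.map_update_smul, update_eq_self, Finset.sum_sub_distrib, hx,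
    sub_zero]

theorem linearIndependent_toLinearMap_of_minimal [Field R] [∀ j, AddCommGroup (M j)]
    [∀ j, Module R (M j)] [AddCommGroup N] [Module R N] [DecidableEq ι] [Fintype κ]
    {φ : MultilinearMap R M N} {v : κ → ∀ j, M j}
    (hmin : ∀ k < Fintype.card κ, ¬ HasDecomposition φ k (∑ i, φ (v i))) (j : ι) :
    LinearIndependent R fun i => φ.toLinearMap (v i) j := by
  rw [Fintype.linearIndependent_iff]
  intro g hg i₀
  by_contra hgi₀
  let x := (g i₀)⁻¹ • v i₀ j
  have hx : ∑ i, g i • φ (update (v i) j x) = 0 := by simpa using DFunLike.congr_fun hg x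
  have gate_eq_zero : φ (update (v i₀) j (v i₀ j - g i₀ • x)) = 0 :=
    φ.map_coord_zero j (by simp [x, hgi₀])
  obtain ⟨k, hk, hdec⟩ := exists_hasDecomposition_lt_card_of_map_eq_zero φ
    (fun i => update (v i) j (v i j - g i • x)) gate_eq_zero
  exact hmin k hk (sum_map_update_sub_smul φ v g hx ▸ hdec)

end Decomposition

theorem stmt_8_general {F A ι κ : Type*} {M : ι → Type*} [Field F] [CommRing A] [Algebra F A]
    [Fintype ι] [DecidableEq ι] [Fintype κ] [∀ j, AddCommGroup (M j)] [∀ j, Module F (M j)]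
    (L : ∀ j, M j →ₗ[F] A) (v : κ → ∀ j, M j)
    (hopt : ¬ ∃ (k : ℕ) (_ : k < Fintype.card κ) (v' : Fin k → ∀ j, M j),
      (∀ i j, v' i j ≠ 0) ∧ ∑ i, ∏ j, L j (v i j) = ∑ i, ∏ j, L j (v' i j)) (j : ι) :
    LinearIndependent F fun i => ∏ j' ∈ Finset.univ.erase j, L j' (v i j') := by
  let φ := (MultilinearMap.mkPiAlgebra F ι A).compLinearMap L
  have hφ : LinearIndependent F fun i => φ.toLinearMap (v i) j :=
    linearIndependent_toLinearMap_of_minimal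
      (fun k hk ⟨v', hv', hsum⟩ => hopt ⟨k, hk, v', hv', by simpa [φ] using hsum⟩) j
  let multiplyByForm : A →ₗ[F] M j →ₗ[F] A := ((LinearMap.mul F A).comp (L j)).flip
  refine LinearIndependent.of_comp multiplyByForm ?_
  convert hφ using 2 with i
  ext x
  have rest_eq : ∏ j' ∈ Finset.univ.erase j, L j' (v i j') =
      ∏ j' ∈ Finset.univ.erase j, L j' (Function.update (v i) j x j') :=
    Finset.prod_congr rfl fun j' hj' => by rw [Function.update_of_ne (Finset.ne_of_mem_erase hj')]
  simp [φ, multiplyByForm, rest_eq, ← Finset.mul_prod_erase Finset.univ _ (Finset.mem_univ j)]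

/-- The linear form in the `j`-th block of variables with a given coefficient vector, as a linear
function of that vector. -/
noncomputable def blockForm {F ι : Type*} [CommSemiring F] {σ : ι → Type*} (j : ι)
    [Fintype (σ j)] : (σ j → F) →ₗ[F] MvPolynomial ((j : ι) × σ j) F :=
  Fintype.linearCombination F fun t => X ⟨j, t⟩

theorem blockForm_apply {F ι : Type*} [CommSemiring F] {σ : ι → Type*} (j : ι) [Fintype (σ j)]
    (a : σ j → F) : blockForm j a = ∑ t, C (a t) * X ⟨j, t⟩ := by
  simp only [blockForm, Fintype.linearCombination_apply, smul_eq_C_mul]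

/-- If C = T_1 + ⋯ + T_k, with T_i = ∏_j ℓ_{i,j} and ℓ_{i,j} a nonzero linear
form in block X_j, computes f and f cannot be computed by any set-multilinear ΣΠΣ circuit with
fewer than k gates (optimal top fan-in), then for every block j the k polynomials
T_i/ℓ_{i,j} = ∏_{j' ≠ j} ℓ_{i,j'} are F-linearly independent. -/
theorem stmt_8 {F : Type*} [Field F] {d k : ℕ} (hd : 1 ≤ d)
    {n : Fin d → ℕ}
    (c : Fin k → (j : Fin d) → Fin (n j) → F) (hc : ∀ i j, c i j ≠ 0)
    (T : Fin k → MvPolynomial ((j : Fin d) × Fin (n j)) F)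
    (hT : ∀ i, T i = ∏ j : Fin d, ∑ t : Fin (n j), C (c i j t) * X ⟨j, t⟩)
    (f : MvPolynomial ((j : Fin d) × Fin (n j)) F) (hf : f = ∑ i, T i)
    (hopt : ¬ ∃ (k' : ℕ) (_ : k' < k) (c' : Fin k' → (j : Fin d) → Fin (n j) → F),
        (∀ i j, c' i j ≠ 0) ∧
        f = ∑ i, ∏ j : Fin d, ∑ t : Fin (n j), C (c' i j t) * X ⟨j, t⟩) :
    ∀ j : Fin d, LinearIndependent F
      (fun i : Fin k =>
        ∏ j' ∈ Finset.univ.erase j, ∑ t : Fin (n j'),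
          C (c i j' t) * (X ⟨j', t⟩ : MvPolynomial ((j : Fin d) × Fin (n j)) F)) := by
  simpa only [blockForm_apply] using
    stmt_8_general (fun j => blockForm (σ := fun j => Fin (n j)) j) c
      (by simpa only [blockForm_apply, Fintype.card_fin, ← hT, ← hf] using hopt)
end

section
/- Let F be a field of characteristic 0 or of characteristic greater than d, and let f ∈ F[x_1,…,x_n] have total degree at most d. Let ∂(f)^⊥ = {a ∈ F^n : a_1·∂f/∂x_1 + ⋯ + a_n·∂f/∂x_n = 0} and let t = dim_F ∂(f)^⊥. Then: (i) there exists an invertible matrix A ∈ F^{n×n} such that the polynomial f(A·x̄) depends only on the variables x_1, …, x_{n−t}; and (ii) for every invertible matrix B ∈ F^{n×n}, the polynomial f(B·x̄) depends on at least n − t variables. Hence the number of essential variables of f equals n − dim_F ∂(f)^⊥. -/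
open MvPolynomial

/-!
Let `A` be invertible with columns `a_j`. By the chain rule
`∂_j (f(A·x̄)) = (∑ i, A i j • ∂_i f)(A·x̄)`, and substitution along `A` is injective, so
`∂_j (f(A·x̄)) = 0` exactly when `a_j ∈ ∂(f)^⊥`. The variables missing from `f(A·x̄)` thus index
linearly independent vectors of `∂(f)^⊥`: there are at most `t` of them. Conversely, a basis of
`∂(f)^⊥` extended to a basis of `F^n` yields a matrix `A` for which `t` of these partial derivatives
vanish; since no exponent occurring in `f(A·x̄)` is a nonzero multiple of the characteristic, the
corresponding variables do not occur.
-/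

namespace EssentialVariables

section Polynomial

variable {R σ τ : Type*} [CommSemiring R]

lemma derivation_aeval {B M : Type*} [CommSemiring B] [Algebra R B] [AddCommMonoid M] [Module R M]
    [Module B M] [IsScalarTower R B M] [Fintype σ] (D : Derivation R B M) (g : σ → B)
    (f : MvPolynomial σ R) :
    D (aeval g f) = ∑ i, aeval g (pderiv i f) • D (g i) := by
  classical
  induction f using MvPolynomial.induction_on with
  | C a => simp
  | add p q hp hq => simp only [map_add, hp, hq, add_smul, Finset.sum_add_distrib]
  | mul_X p k hp =>
    have hX : ∑ i, aeval g (p * pderiv i (X k)) • D (g i) = aeval g p • D (g k) := by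
      simp [pderiv_X, Pi.single_apply, apply_ite (aeval g)]
    have hD : ∑ i, aeval g (pderiv i p * X k) • D (g i) = g k • D (aeval g p) := by
      simp only [map_mul, aeval_X, hp, Finset.smul_sum, mul_comm _ (g k), mul_smul]
    rw [map_mul, aeval_X, D.leibniz, ← hX, ← hD, ← Finset.sum_add_distrib]
    exact Finset.sum_congr rfl fun i _ => by rw [pderiv_mul, map_add, add_smul, add_comm]

lemma totalDegree_aeval_le {g : σ → MvPolynomial τ R} {k : ℕ} (hg : ∀ i, (g i).totalDegree ≤ k)
    (f : MvPolynomial σ R) : (aeval g f).totalDegree ≤ f.totalDegree * k := by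
  rw [aeval_def, eval₂_eq, algebraMap_eq]
  refine totalDegree_finsetSum_le fun m hm => ?_
  calc (C (coeff m f) * ∏ i ∈ m.support, g i ^ m i).totalDegree
      ≤ (∏ i ∈ m.support, g i ^ m i).totalDegree := by
        simpa using totalDegree_mul (C (coeff m f)) (∏ i ∈ m.support, g i ^ m i)
    _ ≤ ∑ i ∈ m.support, (g i ^ m i).totalDegree := totalDegree_finsetProd _ _
    _ ≤ ∑ i ∈ m.support, m i * k :=
        Finset.sum_le_sum fun i _ => (totalDegree_pow _ _).trans (Nat.mul_le_mul_left _ (hg i))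
    _ = (m.sum fun _ e => e) * k := (Finset.sum_mul ..).symm
    _ ≤ f.totalDegree * k := Nat.mul_le_mul_right k (le_totalDegree hm)

lemma notMem_vars_of_pderiv_eq_zero [NoZeroDivisors R] {f : MvPolynomial σ R} {i : σ}
    (hcast : ∀ k ≠ 0, k ≤ f.degreeOf i → (k : R) ≠ 0) (h : pderiv i f = 0) : i ∉ f.vars := by
  classical
  intro hi
  obtain ⟨m, hm, him⟩ := (mem_vars_iff_mem_support i).1 hi
  have hle : Finsupp.single i 1 ≤ m :=
    Finsupp.single_le_iff.2 (Nat.one_le_iff_ne_zero.2 (Finsupp.mem_support_iff.1 him))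
  obtain ⟨m, rfl⟩ := le_iff_exists_add'.1 hle
  have hexp : m i + 1 ≤ f.degreeOf i := by simpa using monomial_le_degreeOf i hm
  have hcoeff : coeff (m + Finsupp.single i 1) f * ((m i + 1 : ℕ) : R) = 0 := by
    simpa [h] using (coeff_pderiv (i := i) f m).symm
  exact mul_ne_zero (mem_support_iff.1 hm) (hcast _ (Nat.succ_ne_zero _) hexp) hcoeff

end Polynomial

section LinearSubst

variable {R σ τ υ : Type*} [CommSemiring R] [Fintype τ]

/-- The substitution `f ↦ f(A·x̄)`: each `x_i` is replaced by the linear form `(A·x̄)_i`. -/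
noncomputable def linearSubst (A : Matrix σ τ R) : MvPolynomial σ R →ₐ[R] MvPolynomial τ R :=
  aeval fun i => ∑ j, C (A i j) * X j

lemma linearSubst_eq_bind₁ (A : Matrix σ τ R) : linearSubst A = bind₁ A.toMvPolynomial := by
  simp only [linearSubst, C_mul_X_eq_monomial]
  rfl

lemma linearSubst_linearSubst [Fintype υ] (A : Matrix σ τ R) (B : Matrix τ υ R)
    (f : MvPolynomial σ R) : linearSubst B (linearSubst A f) = linearSubst (A * B) f := by
  simp only [linearSubst_eq_bind₁, bind₁_bind₁, ← Matrix.toMvPolynomial_mul]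

lemma linearSubst_one [DecidableEq τ] (f : MvPolynomial τ R) :
    linearSubst (1 : Matrix τ τ R) f = f := by
  simp [linearSubst_eq_bind₁]

lemma totalDegree_linearSubst_le (A : Matrix σ τ R) (f : MvPolynomial σ R) :
    (linearSubst A f).totalDegree ≤ f.totalDegree := by
  rw [linearSubst_eq_bind₁, ← mul_one f.totalDegree]
  exact totalDegree_aeval_le A.toMvPolynomial_totalDegree_le f

lemma pderiv_linearSubst [Fintype σ] (A : Matrix σ τ R) (f : MvPolynomial σ R) (j : τ) :
    pderiv j (linearSubst A f) = linearSubst A (∑ i, A i j • pderiv i f) := by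
  classical
  have pderiv_linearForm (i : σ) : pderiv j (∑ k, C (A i k) * X k) = C (A i j) := by
    simp [pderiv_X, Pi.single_apply]
  rw [linearSubst, derivation_aeval, map_sum]
  refine Finset.sum_congr rfl fun i _ => ?_
  rw [pderiv_linearForm, map_smul, smul_eq_C_mul, smul_eq_mul, mul_comm]

lemma linearSubst_injective_of_mul_eq_one [Finite σ] [DecidableEq σ] {A : Matrix σ τ R}
    {B : Matrix τ σ R} (hAB : A * B = 1) : Function.Injective (linearSubst A) := by
  have := Fintype.ofFinite σ
  refine Function.LeftInverse.injective (g := linearSubst B) fun f => ?_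
  rw [linearSubst_linearSubst, hAB, linearSubst_one]

end LinearSubst

section Perp

variable {R σ τ : Type*} [CommSemiring R] [Fintype σ]

/-- The space `∂(f)^⊥` of directions along which the derivative of `f` vanishes. -/
noncomputable def pderivPerp (f : MvPolynomial σ R) : Submodule R (σ → R) :=
  LinearMap.ker (Fintype.linearCombination R fun i => pderiv i f)

lemma mem_pderivPerp {f : MvPolynomial σ R} {a : σ → R} :
    a ∈ pderivPerp f ↔ ∑ i, a i • pderiv i f = 0 :=
  Iff.rfl

lemma setFinrank_eq_finrank_pderivPerp (f : MvPolynomial σ R) :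
    Set.finrank R {a : σ → R | ∑ i, a i • pderiv i f = 0} = Module.finrank R (pderivPerp f) :=
  congrArg (fun K : Submodule R (σ → R) => Module.finrank R K) (Submodule.span_eq (pderivPerp f))

lemma col_mem_pderivPerp_iff [Fintype τ] {A : Matrix σ τ R}
    (hA : Function.Injective (linearSubst A)) (f : MvPolynomial σ R) (j : τ) :
    A.col j ∈ pderivPerp f ↔ pderiv j (linearSubst A f) = 0 := by
  rw [pderiv_linearSubst, map_eq_zero_iff _ hA, mem_pderivPerp]
  rfl

end Perp

section NumEssentialVars

variable {R σ : Type*} [CommRing R] [Fintype σ] [DecidableEq σ]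

/-- The number of essential variables of `f`. The set of bounds is upward closed, so its infimum
is the least number of variables on which some `f(A·x̄)` with `A` invertible depends. -/
noncomputable def numEssentialVars (f : MvPolynomial σ R) : ℕ :=
  sInf {m | ∃ A : Matrix σ σ R, IsUnit A.det ∧ (linearSubst A f).vars.card ≤ m}

theorem card_sub_finrank_pderivPerp_le_card_vars [Nontrivial R] [IsNoetherianRing R]
    (f : MvPolynomial σ R) (B : Matrix σ σ R) (hB : IsUnit B.det) :
    Fintype.card σ - Module.finrank R (pderivPerp f) ≤ (linearSubst B f).vars.card := by
  set V := (linearSubst B f).vars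
  have hinj := linearSubst_injective_of_mul_eq_one (B.mul_nonsing_inv hB)
  have hmem (j : {j // j ∉ V}) : B.col j ∈ pderivPerp f :=
    (col_mem_pderivPerp_iff hinj f j).2 (pderiv_eq_zero_of_notMem_vars j.2)
  have hcols : LinearIndependent R fun j : {j // j ∉ V} => B.col j :=
    (Matrix.linearIndependent_cols_of_isUnit (B.isUnit_iff_isUnit_det.2 hB)).comp _
      Subtype.val_injective
  have hind : LinearIndependent R fun j : {j // j ∉ V} => (⟨B.col j, hmem j⟩ : pderivPerp f) :=
    .of_comp (pderivPerp f).subtype hcols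
  have hcard : Fintype.card σ - V.card ≤ Module.finrank R (pderivPerp f) := by
    simpa [Fintype.card_subtype_compl] using hind.fintype_card_le_finrank
  omega

end NumEssentialVars

section Field

variable {F σ : Type*} [Field F] [Fintype σ] [DecidableEq σ]

lemma exists_isUnit_det_forall_col_mem (K : Submodule F (σ → F)) {s : Finset σ}
    (hs : s.card = Module.finrank F K) :
    ∃ A : Matrix σ σ F, IsUnit A.det ∧ ∀ j ∈ s, A.col j ∈ K := by
  obtain ⟨L, hKL⟩ := K.exists_isCompl
  have hL : Fintype.card {j // j ∉ s} = Module.finrank F L := by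
    have := Submodule.finrank_add_eq_of_isCompl hKL
    rw [Module.finrank_fintype_fun_eq_card] at this
    rw [Fintype.card_subtype_compl, Fintype.card_coe]
    omega
  let bK : Module.Basis {j // j ∈ s} F K :=
    (Module.finBasis F K).reindex (Fintype.equivOfCardEq (by simp [hs]))
  let bL : Module.Basis {j // j ∉ s} F L :=
    (Module.finBasis F L).reindex (Fintype.equivOfCardEq (by simp [← hL]))
  let b : Module.Basis σ F (σ → F) :=
    ((bK.prod bL).map (K.prodEquivOfIsCompl L hKL)).reindex (Equiv.sumCompl (· ∈ s))
  refine ⟨(Pi.basisFun F σ).toMatrix b, ?_, fun j hj => ?_⟩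
  · rw [← Module.Basis.det_apply]
    exact (Pi.basisFun F σ).isUnit_det b
  · have hcol : ((Pi.basisFun F σ).toMatrix b).col j = bK ⟨j, hj⟩ := by
      ext i
      simp [Module.Basis.toMatrix_apply, b, hj]
    exact hcol ▸ (bK ⟨j, hj⟩).2

theorem exists_disjoint_vars_linearSubst {f : MvPolynomial σ F}
    (hcast : ∀ k ≠ 0, k ≤ f.totalDegree → (k : F) ≠ 0) {s : Finset σ}
    (hs : s.card = Module.finrank F (pderivPerp f)) :
    ∃ A : Matrix σ σ F, IsUnit A.det ∧ Disjoint s (linearSubst A f).vars := by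
  obtain ⟨A, hA, hcol⟩ := exists_isUnit_det_forall_col_mem (pderivPerp f) hs
  have hinj := linearSubst_injective_of_mul_eq_one (A.mul_nonsing_inv hA)
  refine ⟨A, hA, Finset.disjoint_left.2 fun j hj => ?_⟩
  refine notMem_vars_of_pderiv_eq_zero (fun k hk hkdeg => hcast k hk ?_)
    ((col_mem_pderivPerp_iff hinj f j).1 (hcol j hj))
  exact hkdeg.trans ((degreeOf_le_totalDegree _ _).trans (totalDegree_linearSubst_le A f))

theorem numEssentialVars_eq {f : MvPolynomial σ F}
    (hcast : ∀ k ≠ 0, k ≤ f.totalDegree → (k : F) ≠ 0) :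
    numEssentialVars f = Fintype.card σ - Module.finrank F (pderivPerp f) := by
  have hle : Module.finrank F (pderivPerp f) ≤ (Finset.univ : Finset σ).card := by
    simpa using (pderivPerp f).finrank_le
  obtain ⟨s, -, hs⟩ := Finset.exists_subset_card_eq hle
  obtain ⟨A, hA, hdisj⟩ := exists_disjoint_vars_linearSubst hcast hs
  have hvars : (linearSubst A f).vars.card ≤ Fintype.card σ - Module.finrank F (pderivPerp f) := by
    rw [← hs, ← Finset.card_compl]
    exact Finset.card_le_card (Finset.subset_compl_iff_disjoint_left.2 hdisj)
  refine IsLeast.csInf_eq ⟨⟨A, hA, hvars⟩, ?_⟩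
  rintro m ⟨B, hB, hm⟩
  exact (card_sub_finrank_pderivPerp_le_card_vars f B hB).trans hm

end Field

lemma natCast_ne_zero_of_lt_ringChar {R : Type*} [NonAssocSemiring R] {d k : ℕ}
    (hchar : ringChar R = 0 ∨ d < ringChar R) (hk : k ≠ 0) (hkd : k ≤ d) : (k : R) ≠ 0 := by
  intro h
  have hdvd : ringChar R ∣ k := ringChar.dvd h
  have hle : ringChar R ≤ k := Nat.le_of_dvd (Nat.pos_of_ne_zero hk) hdvd
  have hne : ringChar R ≠ 0 := fun h0 => hk (zero_dvd_iff.1 (h0 ▸ hdvd))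
  omega

lemma card_filter_sub_le_val {n t : ℕ} (h : t ≤ n) :
    (Finset.univ.filter fun i : Fin n => n - t ≤ i).card = t := by
  simp only [← not_lt, ← Finset.compl_filter, Finset.card_compl, Fintype.card_fin,
    Fin.card_filter_val_lt]
  omega

end EssentialVariables

open EssentialVariables

/-- (Carlini/Kayal) Over a field of characteristic 0 or > d, for f of total
degree ≤ d, with t = dim {a ∈ F^n : Σ_i a_i ∂f/∂x_i = 0}:
(i) some invertible A makes f(A·x̄) depend only on the first n − t variables;
(ii) for every invertible B, f(B·x̄) depends on at least n − t variables;
hence the number of essential variables of f (the least m such that some invertible change of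
variables makes f depend on only m variables) equals n − t. -/
theorem stmt_13 {F : Type*} [Field F] {n d : ℕ}
    (hchar : ringChar F = 0 ∨ d < ringChar F)
    (f : MvPolynomial (Fin n) F) (hdeg : f.totalDegree ≤ d) :
    (∃ A : Matrix (Fin n) (Fin n) F, IsUnit A.det ∧
      ∀ i : Fin n,
        n - Set.finrank F {a : Fin n → F | (∑ i, a i • pderiv i f) = 0} ≤ (i : ℕ) →
        i ∉ (aeval (fun i : Fin n => ∑ j : Fin n, C (A i j) * X j) f).vars) ∧
    (∀ B : Matrix (Fin n) (Fin n) F, IsUnit B.det →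
      n - Set.finrank F {a : Fin n → F | (∑ i, a i • pderiv i f) = 0} ≤
        ((aeval (fun i : Fin n => ∑ j : Fin n, C (B i j) * X j) f).vars).card) ∧
    sInf {m : ℕ | ∃ A : Matrix (Fin n) (Fin n) F, IsUnit A.det ∧
        ((aeval (fun i : Fin n => ∑ j : Fin n, C (A i j) * X j) f).vars).card ≤ m} =
      n - Set.finrank F {a : Fin n → F | (∑ i, a i • pderiv i f) = 0} := by
  have hcast (k : ℕ) (hk : k ≠ 0) (hkf : k ≤ f.totalDegree) : (k : F) ≠ 0 :=
    natCast_ne_zero_of_lt_ringChar hchar hk (hkf.trans hdeg)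
  rw [setFinrank_eq_finrank_pderivPerp]
  have hle : Module.finrank F (pderivPerp f) ≤ n := by simpa using (pderivPerp f).finrank_le
  obtain ⟨A, hA, hdisj⟩ := exists_disjoint_vars_linearSubst hcast (card_filter_sub_le_val hle)
  have hlower := card_sub_finrank_pderivPerp_le_card_vars f
  have hmin := numEssentialVars_eq hcast
  rw [Fintype.card_fin] at hlower hmin
  exact ⟨⟨A, hA, fun i hi => Finset.disjoint_left.1 hdisj (by simpa only [Finset.mem_filter_univ])⟩,
    hlower, hmin⟩
end

section
/- If f ∈ F[x_1,…,x_n] can be written as f = Σ_{i=1}^k ∏_{j=1}^{d_i} ℓ_{i,j}, where each ℓ_{i,j} is a linear polynomial (total degree at most 1, constant term allowed) and d_i ≤ d for all i, then f has at most kd essential variables: there exists an invertible matrix A ∈ F^{n×n} such that f(A·x̄) depends only on the variables x_1, …, x_m, where m = min(n, kd). -/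
open MvPolynomial

/-!
The linear parts of the `ℓ i j` are the rows of a matrix `L` with at most `k * d` rows, so the
kernel of `L` has codimension at most `min n (k * d)`. Take as columns of `A` a basis of `Fⁿ` whose
vectors beyond the first `min n (k * d)` lie in this kernel. Substituting `A x̄` replaces `L` by
`L * A`, whose columns beyond the first `min n (k * d)` vanish, so every `ℓ i j`, and hence `f`,
becomes a polynomial in the first `min n (k * d)` variables.
-/

section LinearAlgebra

variable {σ : Type*} [Fintype σ]

variable {K V : Type*} [DivisionRing K] [AddCommGroup V] [Module K V] [FiniteDimensional K V]

theorem exists_basis_eqOn_of_linearIndepOn (hσ : Fintype.card σ = Module.finrank K V)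
    {s : Set σ} {v : σ → V} (hv : LinearIndepOn K v s) :
    ∃ b : Module.Basis σ K V, Set.EqOn b v s := by
  let b := Module.Basis.extend hv.id_image
  let B := hv.id_image.extend (Set.subset_univ (v '' s))
  have : Fintype B := FiniteDimensional.fintypeBasisIndex b
  have hcard : Fintype.card σ = B.toFinset.card := by
    rw [hσ, Set.toFinset_card, Module.finrank_eq_card_basis b]
  have hmaps : Set.MapsTo v s B.toFinset := by
    rw [Set.coe_toFinset, Set.mapsTo_iff_image_subset]
    exact Module.Basis.subset_extend hv.id_image
  obtain ⟨e, he⟩ := hmaps.exists_equiv_extend_of_card_eq hcard hv.injOn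
  refine ⟨b.reindex (e.trans (Equiv.subtypeEquivRight fun _ ↦ Set.mem_toFinset)).symm, ?_⟩
  intro t ht
  simp [b, he t ht]

theorem exists_basis_mem_submodule_of_notMem (hσ : Fintype.card σ = Module.finrank K V)
    (U : Submodule K V) {s : Finset σ} (hs : Module.finrank K (V ⧸ U) ≤ s.card) :
    ∃ b : Module.Basis σ K V, ∀ t ∉ s, b t ∈ U := by
  classical
  have hcard : Fintype.card {t // t ∉ s} ≤ Module.finrank K U := by
    have := U.finrank_quotient_add_finrank
    rw [Fintype.card_subtype_compl, Fintype.card_coe]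
    lia
  obtain ⟨u, hu⟩ := exists_linearIndependent_of_le_finrank hcard
  let v : σ → U := fun t ↦ if ht : t ∉ s then u (Fintype.equivFin _ ⟨t, ht⟩) else 0
  have hv : LinearIndepOn K (fun t ↦ (v t : V)) {t | t ∉ s} := by
    have hrestrict : (fun t : {t // t ∉ s} ↦ v t) = u ∘ Fintype.equivFin _ :=
      funext fun t ↦ dif_pos t.2
    refine LinearIndependent.map' (v := fun t : {t // t ∉ s} ↦ v t) ?_ U.subtype U.ker_subtype
    exact hrestrict ▸ hu.comp _ (Fintype.equivFin _).injective
  obtain ⟨b, hb⟩ := exists_basis_eqOn_of_linearIndepOn hσ hv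
  exact ⟨b, fun t ht ↦ hb ht ▸ (v t).2⟩

theorem exists_isUnit_det_mul_col_eq_zero {F ι : Type*} [Field F] [DecidableEq σ]
    (L : Matrix ι σ F) {s : Finset σ} (hs : L.rank ≤ s.card) :
    ∃ A : Matrix σ σ F, IsUnit A.det ∧ ∀ t ∉ s, (L * A).col t = 0 := by
  have hquot : Module.finrank F ((σ → F) ⧸ L.mulVecLin.ker) ≤ s.card := by
    rwa [L.mulVecLin.quotKerEquivRange.finrank_eq]
  obtain ⟨b, hb⟩ := exists_basis_mem_submodule_of_notMem (by simp) L.mulVecLin.ker hquot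
  refine ⟨(Pi.basisFun F σ).toMatrix b, (Pi.basisFun F σ).isUnit_det b, fun t ht ↦ ?_⟩
  have hcol : (L * (Pi.basisFun F σ).toMatrix b).col t = L.mulVecLin (b t) := rfl
  rw [hcol, LinearMap.mem_ker.1 (hb t ht)]

end LinearAlgebra

section Substitution

variable {R σ τ ι : Type*} [CommSemiring R]

/-- The matrix of linear parts of a family of polynomials: row `i` lists the coefficients of the
variables in `ℓ i`. The constant terms are left out, since a linear substitution does not change
them. -/
noncomputable def linearCoeffMatrix (ℓ : ι → MvPolynomial σ R) : Matrix ι σ R :=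
  Matrix.of fun i j ↦ coeff (Finsupp.single j 1) (ℓ i)

variable [Fintype σ]

theorem toMvPolynomial_eq_sum_C_mul_X (M : Matrix ι σ R) :
    M.toMvPolynomial = fun i ↦ ∑ j, C (M i j) * X j := by
  funext i
  simp only [Matrix.toMvPolynomial, C_mul_X_eq_monomial]

theorem eq_C_add_toMvPolynomial_linearCoeffMatrix (ℓ : ι → MvPolynomial σ R) {i : ι}
    (hℓ : (ℓ i).totalDegree ≤ 1) :
    ℓ i = C (coeff 0 (ℓ i)) + (linearCoeffMatrix ℓ).toMvPolynomial i := by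
  classical
  have hsupport : (ℓ i).support ⊆ insert 0 (Finset.univ.image fun j ↦ Finsupp.single j 1) := by
    intro m hm
    have hdeg : m.degree ≤ 1 := (le_totalDegree hm).trans hℓ
    rcases Nat.le_one_iff_eq_zero_or_eq_one.1 hdeg with h0 | h1
    · simp [(Finsupp.degree_eq_zero_iff m).1 h0]
    · obtain ⟨j, rfl⟩ := Finsupp.range_single_one.ge h1
      simp
  calc ℓ i = ∑ m ∈ (ℓ i).support, monomial m (coeff m (ℓ i)) := (ℓ i).as_sum
    _ = ∑ m ∈ insert 0 (Finset.univ.image fun j ↦ Finsupp.single j 1),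
          monomial m (coeff m (ℓ i)) :=
        Finset.sum_subset hsupport fun m _ hm ↦ by rw [notMem_support_iff.1 hm, map_zero]
    _ = C (coeff 0 (ℓ i)) + (linearCoeffMatrix ℓ).toMvPolynomial i := by
        rw [Finset.sum_insert (by simp),
          Finset.sum_image (Finsupp.single_left_injective one_ne_zero).injOn]
        rfl

theorem toMvPolynomial_mem_supported {M : Matrix ι σ R} {s : Set σ}
    (hM : ∀ t ∉ s, M.col t = 0) (i : ι) : M.toMvPolynomial i ∈ supported R s := by
  rw [toMvPolynomial_eq_sum_C_mul_X]
  refine sum_mem fun j _ ↦ ?_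
  by_cases hj : j ∈ s
  · exact mul_mem (Subalgebra.algebraMap_mem _ _) (Algebra.subset_adjoin ⟨j, hj, rfl⟩)
  · have hentry : M i j = 0 := congrFun (hM j hj) i
    simp only [hentry, map_zero, zero_mul, zero_mem]

theorem bind₁_toMvPolynomial_mem_supported [Fintype τ] {ℓ : ι → MvPolynomial σ R}
    (hℓ : ∀ i, (ℓ i).totalDegree ≤ 1) {f : MvPolynomial σ R}
    (hf : f ∈ Algebra.adjoin R (Set.range ℓ)) {A : Matrix σ τ R} {s : Set τ}
    (hA : ∀ t ∉ s, (linearCoeffMatrix ℓ * A).col t = 0) :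
    bind₁ A.toMvPolynomial f ∈ supported R s := by
  suffices hgen : Algebra.adjoin R (Set.range ℓ) ≤
      (supported R s).comap (bind₁ A.toMvPolynomial) from hgen hf
  rw [Algebra.adjoin_le_iff]
  rintro _ ⟨i, rfl⟩
  have hsubst : bind₁ A.toMvPolynomial (ℓ i) =
      C (coeff 0 (ℓ i)) + (linearCoeffMatrix ℓ * A).toMvPolynomial i := by
    rw [Matrix.toMvPolynomial_mul]
    conv_lhs => rw [eq_C_add_toMvPolynomial_linearCoeffMatrix ℓ (hℓ i)]
    rw [map_add, bind₁_C_right]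
  rw [SetLike.mem_coe, Subalgebra.mem_comap, hsubst]
  exact add_mem (Subalgebra.algebraMap_mem _ _) (toMvPolynomial_mem_supported hA i)

end Substitution

theorem exists_isUnit_det_bind₁_mem_supported {F σ ι : Type*} [Field F] [Fintype σ]
    [DecidableEq σ] {ℓ : ι → MvPolynomial σ F} (hℓ : ∀ i, (ℓ i).totalDegree ≤ 1)
    {f : MvPolynomial σ F} (hf : f ∈ Algebra.adjoin F (Set.range ℓ)) {s : Finset σ}
    (hs : (linearCoeffMatrix ℓ).rank ≤ s.card) :
    ∃ A : Matrix σ σ F, IsUnit A.det ∧ bind₁ A.toMvPolynomial f ∈ supported F (s : Set σ) := by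
  obtain ⟨A, hdet, hA⟩ := exists_isUnit_det_mul_col_eq_zero (linearCoeffMatrix ℓ) hs
  exact ⟨A, hdet, bind₁_toMvPolynomial_mem_supported hℓ hf hA⟩

/-- If f = Σ_{i=1}^k ∏_{j=1}^{d_i} ℓ_{i,j} with each ℓ_{i,j} a linear
polynomial (total degree ≤ 1) and d_i ≤ d, then f has at most kd essential variables: some
invertible A ∈ F^{n×n} makes f(A·x̄) depend only on x_1, …, x_m with m = min(n, kd). -/
theorem stmt_15 {F : Type*} [Field F] {n k d : ℕ}
    (d' : Fin k → ℕ) (hd' : ∀ i, d' i ≤ d)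
    (ℓ : (i : Fin k) → Fin (d' i) → MvPolynomial (Fin n) F)
    (hlin : ∀ i j, (ℓ i j).totalDegree ≤ 1)
    (f : MvPolynomial (Fin n) F)
    (hf : f = ∑ i, ∏ j, ℓ i j) :
    ∃ A : Matrix (Fin n) (Fin n) F, IsUnit A.det ∧
      ∀ t : Fin n, min n (k * d) ≤ (t : ℕ) →
        t ∉ (aeval (fun i : Fin n => ∑ j : Fin n, C (A i j) * X j) f).vars := by
  let ℓ' : (Σ i, Fin (d' i)) → MvPolynomial (Fin n) F := fun p ↦ ℓ p.1 p.2
  have hf' : f ∈ Algebra.adjoin F (Set.range ℓ') := by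
    rw [hf]
    exact sum_mem fun i _ ↦ prod_mem fun j _ ↦ Algebra.subset_adjoin ⟨⟨i, j⟩, rfl⟩
  have hforms : Fintype.card (Σ i, Fin (d' i)) ≤ k * d := by
    simpa using Finset.sum_le_card_nsmul Finset.univ d' d fun i _ ↦ hd' i
  have hrank : (linearCoeffMatrix ℓ').rank ≤ min n (k * d) :=
    le_min ((Matrix.rank_le_card_width _).trans_eq (Fintype.card_fin n))
      ((Matrix.rank_le_card_height _).trans hforms)
  let s : Finset (Fin n) := {t | (t : ℕ) < min n (k * d)}
  have hs : s.card = min n (k * d) := by simp [s, Fin.card_filter_val_lt]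
  obtain ⟨A, hdet, hA⟩ := exists_isUnit_det_bind₁_mem_supported (ℓ := ℓ')
    (fun p ↦ hlin p.1 p.2) hf' (hrank.trans_eq hs.symm)
  refine ⟨A, hdet, fun t ht hvars ↦ ?_⟩
  rw [← toMvPolynomial_eq_sum_C_mul_X] at hvars
  have hts : t ∈ s := mem_supported.1 hA hvars
  exact ht.not_gt (Finset.mem_filter.1 hts).2
end

section
/- Let F be an algebraically closed field, let m ≥ 2, and let f_1, …, f_m ∈ F[x_1,…,x_n] be polynomials such that each f_i, viewed as a polynomial in x_1 over F[x_2,…,x_n], is monic in x_1 of positive x_1-degree, and gcd(f_1,…,f_m) = 1. Let u_2, …, u_m be fresh variables and let h = Res_{x_1}(f_1, u_2 f_2 + u_3 f_3 + ⋯ + u_m f_m) ∈ F[x_2,…,x_n, u_2,…,u_m]; write h = Σ_α h_α(x_2,…,x_n) u^α with h_α ∈ F[x_2,…,x_n]. Then the system f_1 = f_2 = ⋯ = f_m = 0 has a common solution in F^n if and only if the system h_α = 0 (over all multi-indices α) has a common solution in F^{n−1}. -/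
/-- The Sylvester matrix of p and q with respect to their degrees: its columns (indexed by
`Fin q.natDegree ⊕ Fin p.natDegree`) are the coefficient vectors of X^a·p (a < deg q) and of
X^b·q (b < deg p), listed in the rows indexed via `finSumFinEquiv`. -/
noncomputable def sylvester {R : Type*} [CommRing R] (p q : Polynomial R) :
    Matrix (Fin q.natDegree ⊕ Fin p.natDegree) (Fin q.natDegree ⊕ Fin p.natDegree) R :=
  Matrix.of fun i j =>
    Sum.elim
      (fun a : Fin q.natDegree => (Polynomial.X ^ (a : ℕ) * p).coeff (finSumFinEquiv j : ℕ))
      (fun b : Fin p.natDegree => (Polynomial.X ^ (b : ℕ) * q).coeff (finSumFinEquiv j : ℕ)) i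

/-- The resultant of two polynomials, as the determinant of their Sylvester matrix. -/
noncomputable def resultant {R : Type*} [CommRing R] (p q : Polynomial R) : R :=
  (sylvester p q).det

/-!
Specializing `x₂, …, xₙ` at a point `y` commutes with taking the resultant with respect to `x₁`, up
to a power of the leading coefficient of the first polynomial, because that coefficient does not
vanish at `y`. The specialized first polynomial splits with roots `a`, so the specialized resultant
is, up to a unit, the product of the linear forms `∑ᵢ gᵢ(a, y) uᵢ` in the `u`-variables. It is the
zero polynomial in `u` iff one of these forms is zero, i.e. iff all `gᵢ` vanish at some root `a`.
-/

namespace GenericResultant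

section Sylvester

variable {R : Type*} [CommRing R]

theorem coeff_X_pow_mul_eq_ite_mem_Icc (p : Polynomial R) (a k : ℕ) :
    (Polynomial.X ^ a * p).coeff k =
      if k ∈ Set.Icc a (a + p.natDegree) then p.coeff (k - a) else 0 := by
  simp only [Polynomial.coeff_X_pow_mul', Set.mem_Icc, ite_and]
  refine if_congr Iff.rfl ?_ rfl
  split_ifs with hk
  · rfl
  · exact Polynomial.coeff_eq_zero_of_natDegree_lt (by omega)

theorem sylvester_eq_submatrix_transpose (p q : Polynomial R) :
    sylvester p q =
      (Polynomial.sylvester q p q.natDegree p.natDegree).transpose.submatrix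
        finSumFinEquiv finSumFinEquiv := by
  ext (a | b) j <;>
    simp [sylvester, Polynomial.sylvester, coeff_X_pow_mul_eq_ite_mem_Icc]

theorem resultant_eq_resultant_swap (p q : Polynomial R) :
    resultant p q = Polynomial.resultant q p := by
  rw [resultant, sylvester_eq_submatrix_transpose, Matrix.det_submatrix_equiv_self,
    Matrix.det_transpose, Polynomial.resultant]

theorem resultant_eq_neg_one_pow_mul (p q : Polynomial R) :
    resultant p q = (-1) ^ (q.natDegree * p.natDegree) * Polynomial.resultant p q := by
  rw [resultant_eq_resultant_swap, Polynomial.resultant_comm]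

end Sylvester

section Specialization

variable {R S : Type*} [CommRing R] [CommRing S] [IsDomain S] (φ : R →+* S)

theorem map_resultant_eq_zero_iff_exists_mem_roots {p : Polynomial R} (q : Polynomial R)
    (hlead : φ p.leadingCoeff ≠ 0) (hsplit : (p.map φ).Splits) :
    φ (resultant p q) = 0 ↔ ∃ x ∈ (p.map φ).roots, q.eval₂ φ x = 0 := by
  have hdeg : (p.map φ).natDegree = p.natDegree :=
    Polynomial.natDegree_map_of_leadingCoeff_ne_zero φ hlead
  have hlead' : (p.map φ).leadingCoeff ≠ 0 := by
    rwa [Polynomial.leadingCoeff_map_of_leadingCoeff_ne_zero φ hlead]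
  have hprod : φ (Polynomial.resultant p q) =
      (p.map φ).leadingCoeff ^ q.natDegree * ((p.map φ).roots.map (q.map φ).eval).prod := by
    rw [← Polynomial.resultant_map_map, ← hdeg,
      Polynomial.resultant_eq_prod_eval _ _ _ Polynomial.natDegree_map_le hsplit]
  have hsign : φ ((-1) ^ (q.natDegree * p.natDegree)) ≠ 0 := by simp
  rw [resultant_eq_neg_one_pow_mul, map_mul, hprod, mul_eq_zero_iff_left hsign,
    mul_eq_zero_iff_left (pow_ne_zero _ hlead'), Multiset.prod_eq_zero_iff, Multiset.mem_map]
  simp only [Polynomial.eval_map]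

end Specialization

section GenericCombination

variable {R S ι : Type*}

/-- The linear combination `∑ᵢ uᵢ gᵢ` of polynomials with generic coefficients: the `uᵢ` are the
variables of `MvPolynomial ι R`, the new coefficient ring. -/
noncomputable def genericCombination [CommSemiring R] [Fintype ι] (g : ι → Polynomial R) :
    Polynomial (MvPolynomial ι R) :=
  ∑ i, Polynomial.C (MvPolynomial.X i) * (g i).map MvPolynomial.C

theorem sum_X_mul_C_eq_zero_iff [CommSemiring R] [Fintype ι] (c : ι → R) :
    (∑ i, MvPolynomial.X i * MvPolynomial.C (c i) : MvPolynomial ι R) = 0 ↔ ∀ i, c i = 0 := by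
  classical
  refine ⟨fun h i => ?_, fun h => by simp [h]⟩
  simpa [Pi.single_apply] using congrArg (MvPolynomial.eval (Pi.single i 1)) h

theorem map_comp_C [CommSemiring R] [CommSemiring S] (φ : R →+* S) :
    (MvPolynomial.map (σ := ι) φ).comp MvPolynomial.C = MvPolynomial.C.comp φ :=
  RingHom.ext (MvPolynomial.map_C φ)

theorem eval₂_genericCombination [CommSemiring R] [CommSemiring S] [Fintype ι]
    (φ : R →+* S) (g : ι → Polynomial R) (x : S) :
    (genericCombination g).eval₂ (MvPolynomial.map φ) (MvPolynomial.C x) =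
      ∑ i, MvPolynomial.X i * MvPolynomial.C ((g i).eval₂ φ x) := by
  simp only [genericCombination, Polynomial.eval₂_finsetSum, Polynomial.eval₂_mul,
    Polynomial.eval₂_C, MvPolynomial.map_X, Polynomial.eval₂_map, map_comp_C, Polynomial.hom_eval₂]

theorem forall_map_coeff_eq_zero_iff [CommSemiring R] [CommSemiring S] (φ : R →+* S)
    (P : MvPolynomial ι R) :
    (∀ α, φ (P.coeff α) = 0) ↔ MvPolynomial.map φ P = 0 := by
  simp only [MvPolynomial.ext_iff, MvPolynomial.coeff_map, MvPolynomial.coeff_zero]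

end GenericCombination

end GenericResultant

open GenericResultant in
theorem stmt_16_general {R S ι : Type*} [CommRing R] [CommRing S] [IsDomain S] [Fintype ι]
    (φ : R →+* S) {f : Polynomial R} (g : ι → Polynomial R)
    (hlead : φ f.leadingCoeff ≠ 0) (hsplit : (f.map φ).Splits) :
    (∃ x, f.eval₂ φ x = 0 ∧ ∀ i, (g i).eval₂ φ x = 0) ↔
      ∀ α, φ ((resultant (f.map MvPolynomial.C) (genericCombination g)).coeff α) = 0 := by
  have hf : f.map φ ≠ 0 := fun h => hlead <| by
    rw [← Polynomial.leadingCoeff_map_of_leadingCoeff_ne_zero φ hlead, h,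
      Polynomial.leadingCoeff_zero]
  have hmap : (f.map MvPolynomial.C).map (MvPolynomial.map (σ := ι) φ) =
      (f.map φ).map MvPolynomial.C := by
    rw [Polynomial.map_map, map_comp_C, ← Polynomial.map_map]
  have hleadC : MvPolynomial.map (σ := ι) φ (f.map MvPolynomial.C).leadingCoeff ≠ 0 := by
    rwa [Polynomial.leadingCoeff_map_of_injective (MvPolynomial.C_injective ι R),
      MvPolynomial.map_C, MvPolynomial.C_ne_zero]
  have hsplitC : ((f.map MvPolynomial.C).map (MvPolynomial.map (σ := ι) φ)).Splits :=
    hmap ▸ hsplit.map _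
  rw [forall_map_coeff_eq_zero_iff,
    map_resultant_eq_zero_iff_exists_mem_roots _ _ hleadC hsplitC, hmap,
    hsplit.roots_map_of_injective (MvPolynomial.C_injective ι S)]
  simp only [Multiset.mem_map, exists_exists_and_eq_and, Polynomial.mem_roots hf,
    Polynomial.IsRoot.def, Polynomial.eval_map, eval₂_genericCombination, sum_X_mul_C_eq_zero_iff]

/-- Let F be algebraically closed and let f₁ and g 1, …, g m' (m' ≥ 1, so
m = m' + 1 ≥ 2 polynomials in all) be polynomials in x₁ over F[x₂,…,x_n] (here with n' = n − 1
further variables), each monic in x₁ of positive x₁-degree, with gcd(f₁, g 1, …, g m') = 1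
(every common divisor is a unit).  Let h = Res_{x₁}(f₁, Σ_i u_i·g i) over the u-variables, with
u-coefficients h_α ∈ F[x₂,…,x_n].  Then the system f₁ = g 1 = ⋯ = g m' = 0 has a common
solution in F^n iff the system h_α = 0 (all α) has a common solution in F^{n−1}. -/
theorem stmt_16 {F : Type*} [Field F] [IsAlgClosed F] {n' m' : ℕ} (hm' : 1 ≤ m')
    (f₁ : Polynomial (MvPolynomial (Fin n') F))
    (g : Fin m' → Polynomial (MvPolynomial (Fin n') F))
    (hf₁ : f₁.Monic) (hf₁d : 0 < f₁.natDegree)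
    (hg : ∀ i, (g i).Monic) (hgd : ∀ i, 0 < (g i).natDegree)
    (hgcd : ∀ p : Polynomial (MvPolynomial (Fin n') F),
      p ∣ f₁ → (∀ i, p ∣ g i) → IsUnit p) :
    (∃ (x₁ : F) (y : Fin n' → F),
        Polynomial.eval₂ (MvPolynomial.eval y) x₁ f₁ = 0 ∧
        ∀ i, Polynomial.eval₂ (MvPolynomial.eval y) x₁ (g i) = 0) ↔
    (∃ y : Fin n' → F, ∀ α : Fin m' →₀ ℕ,
        MvPolynomial.eval y
          (MvPolynomial.coeff α
            (resultant
              (f₁.map (MvPolynomial.C :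
                MvPolynomial (Fin n') F →+* MvPolynomial (Fin m') (MvPolynomial (Fin n') F)))
              (∑ i, Polynomial.C (MvPolynomial.X i) *
                (g i).map (MvPolynomial.C :
                  MvPolynomial (Fin n') F →+*
                    MvPolynomial (Fin m') (MvPolynomial (Fin n') F))))) = 0) := by
  refine exists_comm.trans (exists_congr fun y => ?_)
  exact stmt_16_general (MvPolynomial.eval y) g (by simp [hf₁.leadingCoeff]) (IsAlgClosed.splits _)
end
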